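/- Generalized CK-extension (monogenic): Let Ω₀ ⊆ ℝ^{p+1} be a domain and A₀ ∈ C^ω(Ω₀, 𝔸) a real analytic function. Then there exists a unique sequence of real analytic functions {A_k}_{k≥1} ⊆ C^ω(Ω₀, 𝔸) such that the series f(x) = Σ_{k≥0} x_q^k A_k(x_p) converges in a p-symmetric slice domain Ω ⊆ Ω₀* := {x_p + x_q : x_p ∈ Ω₀, x_q ∈ ℝ^q} with Ω₀ ⊂ Ω and its sum f is left monogenic in Ω. The coefficients are necessarily A_{2k} = (Γ(q/2)/(2^{2k} k! Γ(k + q/2))) Δ_{x_p}^k A₀ and A_{2k+1} = (Γ(q/2)/(2^{2k+1} k! Γ(k + q/2 + 1))) Δ_{x_p}^k (D_{x_p} A₀); that is, f = GCK[A₀]. -/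

import Mathlib

open scoped BigOperators
open Filter Topology

namespace GPSM

variable (A : Type*) [NormedAddCommGroup A] [NormedSpace ℝ A] [Mul A] [One A]

/-- `A` is a real alternative algebra with unit `1`, of finite dimension `d > 1`,
equipped with an anti-involution `conj` (a real-linear map with `(a^c)^c = a`,
`(ab)^c = b^c a^c`, fixing the reals).  The associator is alternating (left/right
alternative laws). -/
structure IsAltStarAlg (conj : A → A) : Prop where
  finDim : FiniteDimensional ℝ A
  one_lt_finrank : 1 < Module.finrank ℝ A
  mul_add' : ∀ a b c : A, a * (b + c) = a * b + a * c
  add_mul' : ∀ a b c : A, (a + b) * c = a * c + b * c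
  smul_mul' : ∀ (r : ℝ) (a b : A), (r • a) * b = r • (a * b)
  mul_smul' : ∀ (r : ℝ) (a b : A), a * (r • b) = r • (a * b)
  one_mul' : ∀ a : A, 1 * a = a
  mul_one' : ∀ a : A, a * 1 = a
  alt_left : ∀ a b : A, a * (a * b) = a * a * b
  alt_right : ∀ a b : A, a * b * b = a * (b * b)
  conj_add : ∀ a b : A, conj (a + b) = conj a + conj b
  conj_smul : ∀ (r : ℝ) (a : A), conj (r • a) = r • conj a
  conj_conj : ∀ a : A, conj (conj a) = a
  conj_mul : ∀ a b : A, conj (a * b) = conj b * conj a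
  conj_one : conj 1 = 1

/-- `v 0, v 1, …, v m` is a hypercomplex basis of the hypercomplex subspace
`M = span(v 0, …, v m)` of `A`: `v 0 = 1`, `t(v s) = 0`, `n(v s) = 1`, the `v s`
anticommute for distinct `s, t ∈ {1,…,m}`, they are linearly independent, and
`M` is contained in the quadratic cone `Q_A`. -/
structure IsHypBasis (conj : A → A) (v : ℕ → A) (m : ℕ) : Prop where
  v_zero : v 0 = 1
  trace_zero : ∀ s, 1 ≤ s → s ≤ m → v s + conj (v s) = 0
  norm_one : ∀ s, 1 ≤ s → s ≤ m → v s * conj (v s) = 1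
  anticomm : ∀ s t, 1 ≤ s → s ≤ m → 1 ≤ t → t ≤ m → s ≠ t → v s * v t = -(v t * v s)
  indep : LinearIndependent ℝ (fun i : Fin (m + 1) => v i)
  mem_cone : ∀ x ∈ Submodule.span ℝ (Set.range fun i : Fin (m + 1) => v (i : ℕ)),
      ∃ tr nr : ℝ, x + conj x = tr • (1 : A) ∧ x * conj x = nr • (1 : A) ∧
        ((∃ r : ℝ, x = r • (1 : A)) ∨ tr ^ 2 < 4 * nr)

variable {A}

/-- Identification of `ℝ^{m+1}` with the hypercomplex subspace `M`:
`(x_0,…,x_m) ↦ Σ x_s • v s`. -/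
def emb (v : ℕ → A) (m : ℕ) (x : Fin (m + 1) → ℝ) : A :=
  ∑ s : Fin (m + 1), x s • v (s : ℕ)

/-- First `p+1` coordinates of a point of `M ≅ ℝ^{m+1}`, i.e. the `x_p`-part. -/
def projP (m p : ℕ) (x : Fin (m + 1) → ℝ) : Fin (p + 1) → ℝ := fun s =>
  if h : (s : ℕ) < m + 1 then x ⟨(s : ℕ), h⟩ else 0

/-- Inclusion `ℝ^{p+1} ⊆ ℝ^{m+1}` (remaining coordinates `0`). -/
def injP (m p : ℕ) (y : Fin (p + 1) → ℝ) : Fin (m + 1) → ℝ := fun s =>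
  if h : (s : ℕ) < p + 1 then y ⟨(s : ℕ), h⟩ else 0

/-- The coordinates of `x_q` (last `q = m - p` coordinates of `x`). -/
def xqpart (m p : ℕ) (x : Fin (m + 1) → ℝ) : Fin (m + 1) → ℝ := fun s =>
  if (s : ℕ) ≤ p then 0 else x s

/-- The coordinates of `x_p` inside `ℝ^{m+1}`. -/
def xppart (m p : ℕ) (x : Fin (m + 1) → ℝ) : Fin (m + 1) → ℝ := fun s =>
  if (s : ℕ) ≤ p then x s else 0

/-- `r = |x_q|`. -/
noncomputable def rad (m p : ℕ) (x : Fin (m + 1) → ℝ) : ℝ :=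
  Real.sqrt (∑ s : Fin (m + 1), (xqpart m p x s) ^ 2)

/-- `ω = x_q / |x_q|` (coordinates), `0` when `x_q = 0`. -/
noncomputable def normq (m p : ℕ) (x : Fin (m + 1) → ℝ) : Fin (m + 1) → ℝ :=
  (rad m p x)⁻¹ • xqpart m p x

/-- The reflection `x = x_p + x_q ↦ x_⋄ = x_p - x_q`. -/
def reflP (m p : ℕ) (x : Fin (m + 1) → ℝ) : Fin (m + 1) → ℝ := fun s =>
  if (s : ℕ) ≤ p then x s else -x s

/-- The sphere `𝕊 = {x_q ∈ span(v_{p+1},…,v_m) : x_q² = -1}`, in coordinates. -/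
def Sph (v : ℕ → A) (m p : ℕ) : Set (Fin (m + 1) → ℝ) :=
  {w | (∀ s : Fin (m + 1), (s : ℕ) ≤ p → w s = 0) ∧ emb v m w * emb v m w = -1}

/-- The point `x_p + r ω` of `M ≅ ℝ^{m+1}`. -/
def pt (m p : ℕ) (w : Fin (m + 1) → ℝ) (y : Fin (p + 1) → ℝ) (r : ℝ) :
    Fin (m + 1) → ℝ :=
  injP m p y + r • w

/-- The slice `Ω_ω ⊆ ℝ^{p+2}` of `Ω` at `ω`. -/
def sliceSet (m p : ℕ) (Ω : Set (Fin (m + 1) → ℝ)) (w : Fin (m + 1) → ℝ) :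
    Set ((Fin (p + 1) → ℝ) × ℝ) := {z | pt m p w z.1 z.2 ∈ Ω}

/-- The restriction `f_ω` of `f` to the slice at `ω`, as a function on `ℝ^{p+2}`. -/
def sliceFun (m p : ℕ) (f : (Fin (m + 1) → ℝ) → A) (w : Fin (m + 1) → ℝ) :
    (Fin (p + 1) → ℝ) × ℝ → A := fun z => f (pt m p w z.1 z.2)

/-- Partial derivative `∂_{x_s}` of a function on `ℝ^{m+1}`. -/
noncomputable def pdF (m : ℕ) (s : Fin (m + 1)) (f : (Fin (m + 1) → ℝ) → A)
    (x : Fin (m + 1) → ℝ) : A := fderiv ℝ f x (Pi.single s 1)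

/-- Partial derivative `∂_{x_s}` of a function on `ℝ^{p+1}`. -/
noncomputable def pdP (p : ℕ) (s : Fin (p + 1)) (g : (Fin (p + 1) → ℝ) → A)
    (y : Fin (p + 1) → ℝ) : A := fderiv ℝ g y (Pi.single s 1)

/-- Partial derivative `∂_{x_s}` of a function on `ℝ^{p+2} = ℝ^{p+1} × ℝ`. -/
noncomputable def pdSx (p : ℕ) (s : Fin (p + 1)) (G : (Fin (p + 1) → ℝ) × ℝ → A)
    (z : (Fin (p + 1) → ℝ) × ℝ) : A := fderiv ℝ G z (Pi.single s 1, 0)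

/-- Partial derivative `∂_r` of a function on `ℝ^{p+2} = ℝ^{p+1} × ℝ`. -/
noncomputable def pdSr (p : ℕ) (G : (Fin (p + 1) → ℝ) × ℝ → A)
    (z : (Fin (p + 1) → ℝ) × ℝ) : A := fderiv ℝ G z (0, 1)

/-- Second partial derivative `∂_r²`. -/
noncomputable def pdSr2 (p : ℕ) (G : (Fin (p + 1) → ℝ) × ℝ → A)
    (z : (Fin (p + 1) → ℝ) × ℝ) : A := pdSr p (pdSr p G) z

/-- The operator `Σ_{lo ≤ s ≤ hi} v_s ∂_{x_s}` on functions on `ℝ^{m+1}`.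
`Dop v m 0 p` is `D_{x_p}`, `Dop v m (p+1) m` is `D_{x_q}`, `Dop v m 0 m` is `D_x`. -/
noncomputable def Dop (v : ℕ → A) (m lo hi : ℕ) (f : (Fin (m + 1) → ℝ) → A)
    (x : Fin (m + 1) → ℝ) : A :=
  ∑ s : Fin (m + 1), if lo ≤ (s : ℕ) ∧ (s : ℕ) ≤ hi then v (s : ℕ) * pdF m s f x else 0

/-- The conjugate operator `∂_{x_0} - Σ_{1 ≤ s ≤ hi} v_s ∂_{x_s}` on functions on
`ℝ^{m+1}`; `Dbarop v m p` is `D̄_{x_p}`, `Dbarop v m m` is `D̄_x`. -/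
noncomputable def Dbarop (v : ℕ → A) (m hi : ℕ) (f : (Fin (m + 1) → ℝ) → A)
    (x : Fin (m + 1) → ℝ) : A :=
  pdF m 0 f x -
    ∑ s : Fin (m + 1), if 1 ≤ (s : ℕ) ∧ (s : ℕ) ≤ hi then v (s : ℕ) * pdF m s f x else 0

/-- The operator `D_{x_p} = Σ_{s=0}^p v_s ∂_{x_s}` on functions on `ℝ^{p+1}`. -/
noncomputable def DopP (v : ℕ → A) (p : ℕ) (g : (Fin (p + 1) → ℝ) → A)
    (y : Fin (p + 1) → ℝ) : A :=
  ∑ s : Fin (p + 1), v (s : ℕ) * pdP p s g y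

/-- The operator `D̄_{x_p} = ∂_{x_0} - Σ_{s=1}^p v_s ∂_{x_s}` on functions on `ℝ^{p+1}`. -/
noncomputable def DbaropP (v : ℕ → A) (p : ℕ) (g : (Fin (p + 1) → ℝ) → A)
    (y : Fin (p + 1) → ℝ) : A :=
  pdP p 0 g y - ∑ s : Fin (p + 1), if 1 ≤ (s : ℕ) then v (s : ℕ) * pdP p s g y else 0

/-- The operator `D_{x_p}` on functions on `ℝ^{p+2} = ℝ^{p+1} × ℝ`. -/
noncomputable def DopSx (v : ℕ → A) (p : ℕ) (G : (Fin (p + 1) → ℝ) × ℝ → A)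
    (z : (Fin (p + 1) → ℝ) × ℝ) : A :=
  ∑ s : Fin (p + 1), v (s : ℕ) * pdSx p s G z

/-- The operator `D̄_{x_p}` on functions on `ℝ^{p+2} = ℝ^{p+1} × ℝ`. -/
noncomputable def DbaropSx (v : ℕ → A) (p : ℕ) (G : (Fin (p + 1) → ℝ) × ℝ → A)
    (z : (Fin (p + 1) → ℝ) × ℝ) : A :=
  pdSx p 0 G z - ∑ s : Fin (p + 1), if 1 ≤ (s : ℕ) then v (s : ℕ) * pdSx p s G z else 0

/-- The Laplacian `Δ_x` on functions on `ℝ^{m+1}`. -/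
noncomputable def lapF (m : ℕ) (f : (Fin (m + 1) → ℝ) → A)
    (x : Fin (m + 1) → ℝ) : A :=
  ∑ s : Fin (m + 1), pdF m s (pdF m s f) x

/-- The Laplacian `Δ_{x_p}` on functions on `ℝ^{p+1}`. -/
noncomputable def lapP (p : ℕ) (g : (Fin (p + 1) → ℝ) → A)
    (y : Fin (p + 1) → ℝ) : A :=
  ∑ s : Fin (p + 1), pdP p s (pdP p s g) y

/-- Iterated Laplacian `Δ_x^k`. -/
noncomputable def lapIterF (m k : ℕ) (f : (Fin (m + 1) → ℝ) → A) :
    (Fin (m + 1) → ℝ) → A :=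
  (fun g => lapF m g)^[k] f

/-- Iterated Laplacian `Δ_{x_p}^k`. -/
noncomputable def lapIterP (p k : ℕ) (g : (Fin (p + 1) → ℝ) → A) :
    (Fin (p + 1) → ℝ) → A :=
  (fun h => lapP p h)^[k] g

/-- The Laplacian `Δ_{x'} = Δ_{x_p} + ∂_r²` on functions on `ℝ^{p+2}`. -/
noncomputable def lapSx (p : ℕ) (G : (Fin (p + 1) → ℝ) × ℝ → A)
    (z : (Fin (p + 1) → ℝ) × ℝ) : A :=
  (∑ s : Fin (p + 1), pdSx p s (pdSx p s G) z) + pdSr2 p G z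

/-- The slice Cauchy-Riemann operator `D_ω = D_{x_p} + ω ∂_r` applied to a function
on `ℝ^{p+2}`, where `ω` is given in coordinates by `w`. -/
noncomputable def DomCR (v : ℕ → A) (m p : ℕ) (w : Fin (m + 1) → ℝ)
    (G : (Fin (p + 1) → ℝ) × ℝ → A) (z : (Fin (p + 1) → ℝ) × ℝ) : A :=
  DopSx v p G z + emb v m w * pdSr p G z

/-- `f` is left generalized partial-slice monogenic (of type `(p, m-p)`) on `Ω`. -/
def GSM (v : ℕ → A) (m p : ℕ) (f : (Fin (m + 1) → ℝ) → A)
    (Ω : Set (Fin (m + 1) → ℝ)) : Prop :=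
  ∀ w ∈ Sph v m p, ContDiffOn ℝ 1 (sliceFun m p f w) (sliceSet m p Ω w) ∧
    ∀ z ∈ sliceSet m p Ω w, DomCR v m p w (sliceFun m p f w) z = 0

/-- `Ω` is partially symmetric with respect to `ℝ^{p+1}`. -/
def PSym (v : ℕ → A) (m p : ℕ) (Ω : Set (Fin (m + 1) → ℝ)) : Prop :=
  ∀ x ∈ Ω, ∀ w ∈ Sph v m p, xppart m p x + rad m p x • w ∈ Ω

/-- `Ω` is a slice domain: a domain meeting `ℝ^{p+1}` all of whose slices are
domains in `ℝ^{p+2}`. -/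
def SliceDomain (v : ℕ → A) (m p : ℕ) (Ω : Set (Fin (m + 1) → ℝ)) : Prop :=
  IsOpen Ω ∧ IsConnected Ω ∧ (∃ x ∈ Ω, xqpart m p x = 0) ∧
    ∀ w ∈ Sph v m p, IsConnected (sliceSet m p Ω w)

/-- The reflection `(x_p, r) ↦ (x_p, -r)` of `ℝ^{p+2}`. -/
def reflD (p : ℕ) (z : (Fin (p + 1) → ℝ) × ℝ) : (Fin (p + 1) → ℝ) × ℝ := (z.1, -z.2)

/-- The p-symmetric completion `Ω_D ⊆ M` of `D ⊆ ℝ^{p+2}`. -/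
def OmegaD (v : ℕ → A) (m p : ℕ) (D : Set ((Fin (p + 1) → ℝ) × ℝ)) :
    Set (Fin (m + 1) → ℝ) :=
  {x | ∃ w ∈ Sph v m p, ∃ z ∈ D, x = pt m p w z.1 z.2}

/-- `(F₁, F₂)` satisfies the even-odd (stem function) conditions on `D`. -/
def IsStem (p : ℕ) (D : Set ((Fin (p + 1) → ℝ) × ℝ))
    (F₁ F₂ : (Fin (p + 1) → ℝ) × ℝ → A) : Prop :=
  ∀ z ∈ D, F₁ (reflD p z) = F₁ z ∧ F₂ (reflD p z) = -F₂ z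

/-- `f` is the generalized partial-slice function induced by the stem `(F₁, F₂)`:
`f(x_p + rω) = F₁(x_p, r) + ω F₂(x_p, r)`. -/
def Induced (v : ℕ → A) (m p : ℕ) (D : Set ((Fin (p + 1) → ℝ) × ℝ))
    (F₁ F₂ : (Fin (p + 1) → ℝ) × ℝ → A) (f : (Fin (m + 1) → ℝ) → A) : Prop :=
  ∀ w ∈ Sph v m p, ∀ z ∈ D, f (pt m p w z.1 z.2) = F₁ z + emb v m w * F₂ z

/-- The generalized Cauchy-Riemann system for the stem `(F₁, F₂)` on `D`. -/
def StemCR (v : ℕ → A) (p : ℕ) (D : Set ((Fin (p + 1) → ℝ) × ℝ))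
    (F₁ F₂ : (Fin (p + 1) → ℝ) × ℝ → A) : Prop :=
  ∀ z ∈ D, DopSx v p F₁ z - pdSr p F₂ z = 0 ∧ DbaropSx v p F₂ z + pdSr p F₁ z = 0

/-- `f` is generalized partial-slice regular on `Ω_D`. -/
def MemGSR (v : ℕ → A) (m p : ℕ) (D : Set ((Fin (p + 1) → ℝ) × ℝ))
    (f : (Fin (m + 1) → ℝ) → A) : Prop :=
  ∃ F₁ F₂ : (Fin (p + 1) → ℝ) × ℝ → A, IsStem p D F₁ F₂ ∧
    ContDiffOn ℝ 1 F₁ D ∧ ContDiffOn ℝ 1 F₂ D ∧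
    Induced v m p D F₁ F₂ f ∧ StemCR v p D F₁ F₂

/-- `f` is a generalized partial-slice function on `Ω`. -/
def MemGS (v : ℕ → A) (m p : ℕ) (Ω : Set (Fin (m + 1) → ℝ))
    (f : (Fin (m + 1) → ℝ) → A) : Prop :=
  ∃ F₁ F₂ : (Fin (p + 1) → ℝ) × ℝ → A,
    (∀ z : (Fin (p + 1) → ℝ) × ℝ, F₁ (reflD p z) = F₁ z ∧ F₂ (reflD p z) = -F₂ z) ∧
    ∀ x ∈ Ω, f x = F₁ (projP m p x, rad m p x) +
      emb v m (normq m p x) * F₂ (projP m p x, rad m p x)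

/-- Non-associative power: `a^n` with products taken from the right. -/
def apow (a : A) (n : ℕ) : A := (fun b => a * b)^[n] 1

/-- Partial even part `PE[f](x) = (f(x) + f(x_⋄))/2`. -/
noncomputable def PE (m p : ℕ) (f : (Fin (m + 1) → ℝ) → A)
    (x : Fin (m + 1) → ℝ) : A := (2 : ℝ)⁻¹ • (f x + f (reflP m p x))

/-- Partial odd part `PO[f](x) = (f(x) - f(x_⋄))/2`. -/
noncomputable def PO (m p : ℕ) (f : (Fin (m + 1) → ℝ) → A)
    (x : Fin (m + 1) → ℝ) : A := (2 : ℝ)⁻¹ • (f x - f (reflP m p x))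

/-- `Ω₀* = {x_p + x_q : x_p ∈ Ω₀, x_q ∈ ℝ^q}`. -/
def Omega0star (m p : ℕ) (Ω₀ : Set (Fin (p + 1) → ℝ)) : Set (Fin (m + 1) → ℝ) :=
  {x | projP m p x ∈ Ω₀}

/-- The spherical derivative `f'_s(x) = (1/2) x_q⁻¹ (f(x) - f(x_⋄))`
(using `x_q⁻¹ = -x_q/|x_q|²`). -/
noncomputable def sder (v : ℕ → A) (m p : ℕ) (f : (Fin (m + 1) → ℝ) → A)
    (x : Fin (m + 1) → ℝ) : A :=
  -(((2 : ℝ) * rad m p x ^ 2)⁻¹) • (emb v m (xqpart m p x) * (f x - f (reflP m p x)))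

/-- The spherical Dirac operator
`Γ f = -(1/2) Σ_{p+1 ≤ i,j ≤ m} v_i (v_j (L_{ij} f))`. -/
noncomputable def sphericalGamma (v : ℕ → A) (m p : ℕ) (f : (Fin (m + 1) → ℝ) → A)
    (x : Fin (m + 1) → ℝ) : A :=
  -((2 : ℝ)⁻¹) • ∑ i : Fin (m + 1), ∑ j : Fin (m + 1),
    if p < (i : ℕ) ∧ p < (j : ℕ) then
      v (i : ℕ) * (v (j : ℕ) * (x i • pdF m j f x - x j • pdF m i f x)) else 0

/-- The slice Cauchy-Riemann operator `D_ω` applied to (the slice restriction of) a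
function `f` on `M`, at the point `x` (with `ω = x_q/|x_q|`). -/
noncomputable def DomCRat (v : ℕ → A) (m p : ℕ) (f : (Fin (m + 1) → ℝ) → A)
    (x : Fin (m + 1) → ℝ) : A :=
  DomCR v m p (normq m p x) (sliceFun m p f (normq m p x)) (projP m p x, rad m p x)

/-- `f` is left monogenic on `Ω`: `f ∈ C¹` and `D_x f = 0`. -/
def Monogenic (v : ℕ → A) (m : ℕ) (f : (Fin (m + 1) → ℝ) → A)
    (Ω : Set (Fin (m + 1) → ℝ)) : Prop :=
  ContDiffOn ℝ 1 f Ω ∧ ∀ x ∈ Ω, Dop v m 0 m f x = 0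

/-- `f` is harmonic on `Ω`: `f ∈ C²` and `Δ_x f = 0`. -/
def Harmonic (m : ℕ) (f : (Fin (m + 1) → ℝ) → A)
    (Ω : Set (Fin (m + 1) → ℝ)) : Prop :=
  ContDiffOn ℝ 2 f Ω ∧ ∀ x ∈ Ω, lapF m f x = 0

/-- A family of functions converges normally (locally a summable uniform bound). -/
def NormallyConvOn {E F : Type*} [TopologicalSpace E] [NormedAddCommGroup F]
    (u : ℕ → E → F) (s : Set E) : Prop :=
  ∀ x ∈ s, ∃ U ∈ nhds x, ∃ c : ℕ → ℝ, Summable c ∧ ∀ k : ℕ, ∀ y ∈ U, ‖u k y‖ ≤ c k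

/-- The generalized partial-slice CK-extension
`CK[f₀](x) = Σ_k (r^{2k}/(2k)!)(-Δ_{x_p})^k f₀(x_p)
  + ω Σ_k (r^{2k+1}/(2k+1)!)(-Δ_{x_p})^k (D_{x_p} f₀)(x_p)`. -/
noncomputable def CKe (v : ℕ → A) (m p : ℕ) (f₀ : (Fin (p + 1) → ℝ) → A)
    (x : Fin (m + 1) → ℝ) : A :=
  (∑' k : ℕ, (((-1 : ℝ) ^ k * rad m p x ^ (2 * k)) / (2 * k).factorial) •
      lapIterP p k f₀ (projP m p x)) +
  emb v m (normq m p x) *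
    ∑' k : ℕ, (((-1 : ℝ) ^ k * rad m p x ^ (2 * k + 1)) / (2 * k + 1).factorial) •
      lapIterP p k (DopP v p f₀) (projP m p x)

/-- The coefficient `Γ(q/2)(-1)^k r^{2k} / (2^{2k} k! Γ(k + q/2))`. -/
noncomputable def hgckC (q k : ℕ) (r : ℝ) : ℝ :=
  (Real.Gamma ((q : ℝ) / 2) * (-1) ^ k * r ^ (2 * k)) /
    (2 ^ (2 * k) * (k.factorial : ℝ) * Real.Gamma ((k : ℝ) + (q : ℝ) / 2))

/-- The coefficient `Γ(q/2)(-1)^k r^{2k} / (2^{2k+1} k! Γ(k + q/2 + 1))`. -/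
noncomputable def gckC' (q k : ℕ) (r : ℝ) : ℝ :=
  (Real.Gamma ((q : ℝ) / 2) * (-1) ^ k * r ^ (2 * k)) /
    (2 ^ (2 * k + 1) * (k.factorial : ℝ) * Real.Gamma ((k : ℝ) + (q : ℝ) / 2 + 1))

/-- The coefficient `Γ(q/2 + 1)(-1)^k r^{2k} / (2^{2k} k! Γ(k + q/2 + 1))`. -/
noncomputable def hgckC' (q k : ℕ) (r : ℝ) : ℝ :=
  (Real.Gamma ((q : ℝ) / 2 + 1) * (-1) ^ k * r ^ (2 * k)) /
    (2 ^ (2 * k) * (k.factorial : ℝ) * Real.Gamma ((k : ℝ) + (q : ℝ) / 2 + 1))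

/-- The monogenic generalized CK-extension `GCK[A₀]`. -/
noncomputable def GCKe (v : ℕ → A) (m p : ℕ) (A₀ : (Fin (p + 1) → ℝ) → A)
    (x : Fin (m + 1) → ℝ) : A :=
  (∑' k : ℕ, hgckC (m - p) k (rad m p x) • lapIterP p k A₀ (projP m p x)) +
  emb v m (xqpart m p x) *
    ∑' k : ℕ, gckC' (m - p) k (rad m p x) • lapIterP p k (DopP v p A₀) (projP m p x)

/-- The harmonic generalized CK-extension `HGCK[A₀, A₁]`. -/
noncomputable def HGCKe (v : ℕ → A) (m p : ℕ) (A₀ A₁ : (Fin (p + 1) → ℝ) → A)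
    (x : Fin (m + 1) → ℝ) : A :=
  (∑' k : ℕ, hgckC (m - p) k (rad m p x) • lapIterP p k A₀ (projP m p x)) +
  emb v m (xqpart m p x) *
    ∑' k : ℕ, hgckC' (m - p) k (rad m p x) • lapIterP p k A₁ (projP m p x)

/-- The operator `(1/r)∂_r`, extended to `r = 0` by its limit `∂_r²` (on even
functions). -/
noncomputable def T1 (p : ℕ) (G : (Fin (p + 1) → ℝ) × ℝ → A) :
    (Fin (p + 1) → ℝ) × ℝ → A := fun z =>
  if z.2 = 0 then pdSr2 p G z else (z.2)⁻¹ • pdSr p G z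

/-- The operator `∂_r ∘ (1/r)`, extended to `r = 0` by its limit `(1/2)∂_r²` (on odd
functions). -/
noncomputable def T2 (p : ℕ) (G : (Fin (p + 1) → ℝ) × ℝ → A) :
    (Fin (p + 1) → ℝ) × ℝ → A := fun z =>
  if z.2 = 0 then (2 : ℝ)⁻¹ • pdSr2 p G z
  else fderiv ℝ (fun t : ℝ => t⁻¹ • G (z.1, t)) z.2 1

/-- `C_q(k) = (q-1)(q-3)⋯(q-2k+1)`, `C_q(0) = 1`. -/
noncomputable def cq (q k : ℕ) : ℝ :=
  ∏ i ∈ Finset.range k, ((q : ℝ) - (2 * (i : ℝ) + 1))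

/-- Double factorial. -/
def dfac : ℕ → ℕ
  | 0 => 1
  | 1 => 1
  | n + 2 => (n + 2) * dfac n

/-- The Fueter-Sce constant `γ_q = (-1)^{(q-1)/2} (q-1)!!/(q-2)!!`. -/
noncomputable def gammaQ (q : ℕ) : ℝ :=
  (-1 : ℝ) ^ ((q - 1) / 2) * (dfac (q - 1) : ℝ) / (dfac (q - 2) : ℝ)

/-! Although `A` is not associative, the left multiplications by the `v s` form a Clifford system
in the associative ring of endomorphisms of `A`, and left multiplication by `x_q` is an element of
that ring which depends linearly on `x_q` and squares to `-|x_q|²`. Since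
`D_{x_q} x_q^k = -c_k x_q^{k-1}` with `c_k = k` for even `k` and `c_k = k + q - 1` for odd `k`,
applying `D_x` to `∑ x_q^k A_k(x_p)` term by term gives zero exactly when
`c_{k+1} A_{k+1} = D A_k`, where `D` is `D_{x_p}` for even `k` and its conjugate for odd `k`. Two
steps of this recursion produce a Laplacian, which yields the stated coefficients.

Existence: Cauchy estimates bound the coefficients of this recursion by `C R ^ k` near every point
of `Ω₀`, because each derivative costs a factor `k` which `c_{k+1}⁻¹` compensates.

Uniqueness: the series is not known to be differentiable term by term. Freezing the coefficients
at `x_p` nevertheless computes `D_{x_q}` of the sum, so `D_{x_p}` of the sum is known along the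
slice `y + t v_m`. Baire's theorem bounds the coefficients geometrically on a small open set,
where the powers of `t` can be compared one after the other. Hence the recursion holds on a dense
set, and by continuity everywhere. -/

section AnalyticEstimates

open Metric

variable {E V : Type*} [NormedAddCommGroup E] [NormedSpace ℝ E]
  [NormedAddCommGroup V] [NormedSpace ℝ V]

theorem exists_nnnorm_changeOrigin_mul_pow_le (P : FormalMultilinearSeries ℝ E V) {r : NNReal}
    (hr : (r + r : ENNReal) < P.radius) :
    ∃ S : NNReal, ∀ z : E, ‖z‖₊ ≤ r → ∀ k, ‖P.changeOrigin z k‖₊ * r ^ k ≤ S := by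
  have hsum := P.changeOriginSeries_summable_aux₁ hr
  have hsigma := NNReal.summable_sigma.1 hsum
  have hrP : (r : ENNReal) < P.radius := le_self_add.trans_lt hr
  refine ⟨_, fun z hz k => le_trans ?_ (hsigma.2.le_tsum k fun _ _ => zero_le)⟩
  have hzP : (‖z‖₊ : ENNReal) < P.radius := lt_of_le_of_lt (by exact_mod_cast hz) hrP
  dsimp only
  rw [NNReal.tsum_mul_right]
  gcongr
  refine (P.nnnorm_changeOrigin_le k hzP).trans (Summable.tsum_le_tsum (fun s => ?_)
    (P.changeOriginSeries_summable_aux₂ hzP k) (P.changeOriginSeries_summable_aux₂ hrP k))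
  gcongr

theorem norm_iteratedFDeriv_le_factorial_mul [CompleteSpace V] {f : E → V}
    {P : FormalMultilinearSeries ℝ E V} {y : E} {r : ENNReal} (hf : HasFPowerSeriesOnBall f P y r)
    (n : ℕ) : ‖iteratedFDeriv ℝ n f y‖ ≤ n.factorial * ‖P n‖ := by
  refine ContinuousMultilinearMap.opNorm_le_bound (by positivity) fun w => ?_
  rw [hf.iteratedFDeriv_eq_sum_of_completeSpace]
  calc ‖∑ σ : Equiv.Perm (Fin n), P n fun i => w (σ i)‖
      ≤ ∑ _σ : Equiv.Perm (Fin n), ‖P n‖ * ∏ i, ‖w i‖ := norm_sum_le_of_le _ fun σ _ => by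
        rw [← Equiv.prod_comp σ fun i => ‖w i‖]
        exact (P n).le_opNorm _
    _ = n.factorial * ‖P n‖ * ∏ i, ‖w i‖ := by
      rw [Finset.sum_const, Finset.card_univ, Fintype.card_perm, Fintype.card_fin, nsmul_eq_mul,
        mul_assoc]

theorem exists_norm_iteratedFDeriv_le_of_analyticAt [CompleteSpace V] {f : E → V} {y₀ : E}
    (hf : AnalyticAt ℝ f y₀) :
    ∃ ε > 0, ∃ C ≥ 0, ∃ R > 0, ∀ y ∈ ball y₀ ε, ∀ n : ℕ,
      ‖iteratedFDeriv ℝ n f y‖ ≤ C * R ^ n * n.factorial := by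
  obtain ⟨P, r, hP⟩ := hf
  obtain ⟨s, hs0, hsr⟩ := ENNReal.lt_iff_exists_nnreal_btwn.1 hP.r_pos
  have hs : 0 < s := by exact_mod_cast hs0
  have hhalf : ((s / 2 : NNReal) + (s / 2 : NNReal) : ENNReal) < r := by
    rwa [← ENNReal.coe_add, add_halves]
  obtain ⟨S, hS⟩ := exists_nnnorm_changeOrigin_mul_pow_le P (hhalf.trans_le hP.r_le)
  refine ⟨s / 2, by positivity, S, S.2, (s / 2 : ℝ)⁻¹, by positivity, fun y hy n => ?_⟩
  have hz : ‖y - y₀‖₊ < s / 2 := by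
    rw [← NNReal.coe_lt_coe, coe_nnnorm, ← dist_eq_norm]
    exact hy
  have hzr : (‖y - y₀‖₊ : ENNReal) < r :=
    lt_of_lt_of_le (by exact_mod_cast hz) (le_self_add.trans hhalf.le)
  have hPy := hP.changeOrigin hzr
  rw [add_sub_cancel] at hPy
  have hn : ‖P.changeOrigin (y - y₀) n‖ ≤ S * (s / 2 : ℝ)⁻¹ ^ n := by
    rw [inv_pow, ← div_eq_mul_inv, le_div_iff₀ (by positivity)]
    exact_mod_cast hS _ hz.le n
  calc ‖iteratedFDeriv ℝ n f y‖ ≤ n.factorial * ‖P.changeOrigin (y - y₀) n‖ :=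
        norm_iteratedFDeriv_le_factorial_mul hPy n
    _ ≤ n.factorial * (S * (s / 2 : ℝ)⁻¹ ^ n) := by gcongr
    _ = S * (s / 2 : ℝ)⁻¹ ^ n * n.factorial := mul_comm _ _

theorem analyticAt_of_recursion [CompleteSpace V] {a : ℕ → E → V}
    {T : ℕ → (E →L[ℝ] V) →L[ℝ] V} (ha : ∀ k, a (k + 1) = fun y => T k (fderiv ℝ (a k) y))
    {y : E} (h₀ : AnalyticAt ℝ (a 0) y) (k : ℕ) : AnalyticAt ℝ (a k) y := by
  induction k with
  | zero => exact h₀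
  | succ k ih => exact ha k ▸ ((T k).analyticAt _).comp ih.fderiv

theorem norm_iteratedFDeriv_le_of_recursion [CompleteSpace V] {a : ℕ → E → V}
    {T : ℕ → (E →L[ℝ] V) →L[ℝ] V} (ha : ∀ k, a (k + 1) = fun y => T k (fderiv ℝ (a k) y))
    {K : ℝ} (hT : ∀ k, ‖T k‖ ≤ K / (k + 1)) {C R : ℝ} {y : E}
    (h_an : AnalyticAt ℝ (a 0) y)
    (h₀ : ∀ n, ‖iteratedFDeriv ℝ n (a 0) y‖ ≤ C * R ^ n * n.factorial) (k n : ℕ) :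
    ‖iteratedFDeriv ℝ n (a k) y‖ ≤ C * K ^ k * R ^ (n + k) * (n + k).factorial / k.factorial := by
  induction k generalizing n with
  | zero => simpa using h₀ n
  | succ k ih =>
    have hcomp : a (k + 1) = T k ∘ fderiv ℝ (a k) := ha k
    calc ‖iteratedFDeriv ℝ n (a (k + 1)) y‖
        ≤ ‖T k‖ * ‖iteratedFDeriv ℝ (n + 1) (a k) y‖ := by
          rw [hcomp, ← norm_iteratedFDeriv_fderiv]
          exact (T k).norm_iteratedFDeriv_comp_left
            (analyticAt_of_recursion ha h_an k).fderiv.contDiffAt le_rfl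
      _ ≤ K / (k + 1) *
          (C * K ^ k * R ^ (n + 1 + k) * (n + 1 + k).factorial / k.factorial) := by
          have hK : 0 ≤ K / (k + 1) := (norm_nonneg (T k)).trans (hT k)
          gcongr
          · exact hT k
          · exact ih (n + 1)
      _ = _ := by
          rw [add_right_comm n 1 k, add_assoc n k 1, Nat.factorial_succ k, pow_succ K]
          push_cast
          field_simp

/-- On `s`, the `C¹` functions `a k` and their derivatives are bounded by `C * R ^ k`. This is what
allows a series `∑ T ^ k (a k)` to be differentiated termwise where `‖T‖ * R < 1`. -/
structure HasGeometricBound (a : ℕ → E → V) (s : Set E) (C R : ℝ) : Prop where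
  contDiffAt : ∀ k, ∀ y ∈ s, ContDiffAt ℝ 1 (a k) y
  norm_le : ∀ k, ∀ y ∈ s, ‖a k y‖ ≤ C * R ^ k
  norm_fderiv_le : ∀ k, ∀ y ∈ s, ‖fderiv ℝ (a k) y‖ ≤ C * R ^ k

theorem HasGeometricBound.mono {a : ℕ → E → V} {s t : Set E} {C R : ℝ}
    (ha : HasGeometricBound a s C R) (hts : t ⊆ s) : HasGeometricBound a t C R :=
  ⟨fun k y hy => ha.contDiffAt k y (hts hy), fun k y hy => ha.norm_le k y (hts hy),
    fun k y hy => ha.norm_fderiv_le k y (hts hy)⟩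

theorem exists_hasGeometricBound_of_recursion [CompleteSpace V] {a : ℕ → E → V}
    {T : ℕ → (E →L[ℝ] V) →L[ℝ] V} (ha : ∀ k, a (k + 1) = fun y => T k (fderiv ℝ (a k) y))
    {K : ℝ} (hT : ∀ k, ‖T k‖ ≤ K / (k + 1)) {y₀ : E} (h₀ : AnalyticAt ℝ (a 0) y₀) :
    ∃ ε > 0, ∃ C, ∃ R ≥ 0, HasGeometricBound a (ball y₀ ε) C R := by
  obtain ⟨ε, hε, C, hC, R, hR, hbound⟩ := exists_norm_iteratedFDeriv_le_of_analyticAt h₀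
  obtain ⟨δ, hδ, hanalytic⟩ := Metric.eventually_nhds_iff_ball.1 h₀.eventually_analyticAt
  have hK : 0 ≤ K := by simpa using (norm_nonneg (T 0)).trans (hT 0)
  have hderiv : ∀ y ∈ ball y₀ (min ε δ), ∀ k n, ‖iteratedFDeriv ℝ n (a k) y‖ ≤
      C * K ^ k * R ^ (n + k) * (n + k).factorial / k.factorial := fun y hy k n =>
    norm_iteratedFDeriv_le_of_recursion ha hT (hanalytic y (ball_subset_ball (min_le_right _ _) hy))
      (hbound y (ball_subset_ball (min_le_left _ _) hy)) k n
  refine ⟨min ε δ, lt_min hε hδ, C * (1 + R), 2 * (K * R), by positivity,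
    fun k y hy => ?_, fun k y hy => ?_, fun k y hy => ?_⟩
  · exact (analyticAt_of_recursion ha
      (hanalytic y (ball_subset_ball (min_le_right _ _) hy)) k).contDiffAt
  · calc ‖a k y‖ ≤ C * K ^ k * R ^ (0 + k) * (0 + k).factorial / k.factorial := by
          simpa using hderiv y hy k 0
      _ = C * 1 * (1 * (K * R)) ^ k := by
          rw [zero_add, one_mul, mul_pow]
          field_simp
      _ ≤ C * (1 + R) * (2 * (K * R)) ^ k := by gcongr <;> linarith
  · have hk : (k + 1 : ℝ) ≤ 2 ^ k := by exact_mod_cast Nat.lt_two_pow_self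
    calc ‖fderiv ℝ (a k) y‖ ≤ C * K ^ k * R ^ (1 + k) * (1 + k).factorial / k.factorial := by
          simpa using hderiv y hy k 1
      _ = C * R * ((k + 1) * (K * R) ^ k) := by
          rw [add_comm 1 k, Nat.factorial_succ, mul_pow, pow_succ]
          push_cast
          field_simp
      _ ≤ C * (1 + R) * (2 ^ k * (K * R) ^ k) := by
          gcongr
          linarith
      _ = C * (1 + R) * (2 * (K * R)) ^ k := by rw [mul_pow 2]

end AnalyticEstimates

section CliffordSystem

/-- `e 0 = 1`, and `e 1, …, e m` are anticommuting square roots of `-1`. The notion is used both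
for hypercomplex bases of an alternative algebra and for the corresponding left multiplications,
which live in an associative ring. -/
structure IsCliffordSystem {R : Type*} [Mul R] [One R] [Neg R] (e : ℕ → R) (m : ℕ) : Prop where
  zero : e 0 = 1
  mul_self : ∀ s, 1 ≤ s → s ≤ m → e s * e s = -1
  anticomm : ∀ s t, 1 ≤ s → s ≤ m → 1 ≤ t → t ≤ m → s ≠ t → e s * e t = -(e t * e s)

/-- The `k`-fold Clifford conjugate of `e`, i.e. the sequence `ē` with `e s * M ^ k = M ^ k * ē s`
for every `M` anticommuting with `e 1, e 2, …`. -/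
def twist {R : Type*} [Ring R] (e : ℕ → R) (k s : ℕ) : R :=
  if s = 0 then e s else (-1) ^ k * e s

theorem IsCliffordSystem.twist_mul_twist_add {R : Type*} [Ring R] {e : ℕ → R} {m s t : ℕ}
    (he : IsCliffordSystem e m) (hs : s ≤ m) (ht : t ≤ m) (k : ℕ) :
    twist e (k + 1) s * twist e k t + twist e (k + 1) t * twist e k s =
      if s = t then 2 else 0 := by
  have hsign : ((-1 : R) ^ k) * (-1) ^ k = 1 := by
    rw [← pow_add, Even.neg_one_pow ⟨k, rfl⟩]
  have hcomm : ∀ a b : R, (-1) ^ k * a * ((-1) ^ k * b) = a * b := fun a b => by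
    rw [((Commute.neg_one_left a).pow_left k).eq, mul_assoc, ← mul_assoc ((-1) ^ k), hsign,
      one_mul]
  rcases Nat.eq_zero_or_pos s with rfl | hs₀ <;> rcases Nat.eq_zero_or_pos t with rfl | ht₀
  · simp [twist, he.zero, one_add_one_eq_two]
  · simp [twist, he.zero, ht₀.ne', ht₀.ne, pow_succ]
  · simp [twist, he.zero, hs₀.ne', pow_succ]
  · rcases eq_or_ne s t with rfl | hst
    · simp [twist, hs₀.ne', pow_succ, hcomm, he.mul_self s hs₀ hs, one_add_one_eq_two]
    · simp [twist, hs₀.ne', ht₀.ne', hst, pow_succ, hcomm, he.anticomm s t hs₀ hs ht₀ ht hst]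

/-- The factor `c_k` in `D_{x_q} x_q^k = -c_k x_q^{k-1}`. -/
def ckFactor (q k : ℕ) : ℝ :=
  if Even k then k else k + q - 1

theorem ckFactor_zero (q : ℕ) : ckFactor q 0 = 0 := by simp [ckFactor]

theorem ckFactor_one (q : ℕ) : ckFactor q 1 = q := by simp [ckFactor]

theorem ckFactor_add_two (q k : ℕ) : ckFactor q (k + 2) = ckFactor q k + 2 := by
  have : Even (k + 2) ↔ Even k := by grind
  simp only [ckFactor, this]
  split_ifs <;> push_cast <;> ring

theorem ckFactor_two_mul (q k : ℕ) : ckFactor q (2 * k) = 2 * k := by simp [ckFactor]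

theorem ckFactor_two_mul_add_one (q k : ℕ) : ckFactor q (2 * k + 1) = 2 * k + q := by
  simp [ckFactor]
  ring

theorem le_ckFactor {q : ℕ} (hq : 1 ≤ q) (k : ℕ) : (k : ℝ) ≤ ckFactor q k := by
  have : (1 : ℝ) ≤ q := by exact_mod_cast hq
  unfold ckFactor
  split_ifs <;> linarith

theorem ckFactor_succ_ne_zero {q : ℕ} (hq : 1 ≤ q) (k : ℕ) : ckFactor q (k + 1) ≠ 0 :=
  (lt_of_lt_of_le (by positivity) (le_ckFactor hq (k + 1))).ne'

theorem ckFactor_succ_le (q k : ℕ) : ckFactor q (k + 1) ≤ (q + 1) * 2 ^ k := by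
  have hpow : (k + 1 : ℝ) ≤ 2 ^ k := by exact_mod_cast Nat.lt_two_pow_self
  have hqk : (0 : ℝ) ≤ q * k := by positivity
  calc ckFactor q (k + 1) ≤ k + 1 + q := by
        unfold ckFactor
        push_cast
        split_ifs <;> linarith
    _ ≤ (q + 1) * (k + 1) := by linarith [hqk]
    _ ≤ (q + 1) * 2 ^ k := by gcongr

variable {R : Type*} [NormedRing R] [NormedAlgebra ℝ R] {e : ℕ → R} {m p : ℕ}

/-- The indices `p + 1, …, m` of the coordinates of `x_q`. -/
def qIndices (m p : ℕ) : Finset (Fin (m + 1)) := {s | p < (s : ℕ)}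

theorem mem_qIndices {m p : ℕ} {s : Fin (m + 1)} : s ∈ qIndices m p ↔ p < (s : ℕ) := by
  simp [qIndices]

theorem card_qIndices {m p : ℕ} (hp : p ≤ m) : (qIndices m p).card = m - p := by
  have : qIndices m p = Finset.Ioi ⟨p, by omega⟩ := by ext s; simp [mem_qIndices, Fin.lt_def]
  rw [this, Fin.card_Ioi]
  simp

/-- The linear map `x ↦ x_q`. -/
noncomputable def vecQ (e : ℕ → R) (m p : ℕ) : (Fin (m + 1) → ℝ) →L[ℝ] R :=
  ∑ s ∈ qIndices m p, (ContinuousLinearMap.proj s).smulRight (e s)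

theorem vecQ_apply (x : Fin (m + 1) → ℝ) :
    vecQ e m p x = ∑ s ∈ qIndices m p, x s • e s := by
  simp [vecQ]

theorem vecQ_single (s : Fin (m + 1)) (t : ℝ) :
    vecQ e m p (Pi.single s t) = if p < (s : ℕ) then t • e s else 0 := by
  simp only [vecQ_apply, qIndices, Finset.sum_filter]
  rw [Finset.sum_eq_single s (fun i _ his => by simp [his]) (by simp)]
  simp

/-- The quadratic form `|x_q|²`. -/
def normSqQ (m p : ℕ) (x : Fin (m + 1) → ℝ) : ℝ :=
  ∑ s ∈ qIndices m p, x s ^ 2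

theorem IsCliffordSystem.basis_mul_vecQ (he : IsCliffordSystem e m) {s : ℕ} (hs₀ : 1 ≤ s)
    (hsp : s ≤ p) (x : Fin (m + 1) → ℝ) : e s * vecQ e m p x = -(vecQ e m p x * e s) := by
  rw [vecQ_apply, Finset.mul_sum, Finset.sum_mul, ← Finset.sum_neg_distrib]
  refine Finset.sum_congr rfl fun t ht => ?_
  have hpt := (mem_qIndices.1 ht)
  rw [mul_smul_comm, smul_mul_assoc, ← smul_neg,
    he.anticomm s t hs₀ (by omega) (by omega) (by omega) (by omega)]

theorem IsCliffordSystem.basis_mul_vecQ_pow (he : IsCliffordSystem e m) {s : ℕ}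
    (hsp : s ≤ p) (x : Fin (m + 1) → ℝ) (k : ℕ) :
    e s * vecQ e m p x ^ k = vecQ e m p x ^ k * twist e k s := by
  rcases Nat.eq_zero_or_pos s with rfl | hs₀
  · simp [twist, he.zero]
  · rw [twist, if_neg hs₀.ne']
    induction k with
    | zero => simp
    | succ k ih =>
      rw [pow_succ, ← mul_assoc, ih, mul_assoc, mul_assoc, he.basis_mul_vecQ hs₀ hsp, pow_succ,
        mul_assoc, mul_neg, ← mul_neg]
      simp [← mul_assoc, ((Commute.neg_one_left (vecQ e m p x)).pow_left k).eq]

theorem IsCliffordSystem.vecQ_mul_self (he : IsCliffordSystem e m) (x : Fin (m + 1) → ℝ) :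
    vecQ e m p x * vecQ e m p x = -normSqQ m p x • (1 : R) := by
  have hterm : ∀ s t : Fin (m + 1), p < (s : ℕ) → p < (t : ℕ) →
      x s • e s * x t • e t + x t • e t * x s • e s =
        if s = t then -(2 * x s ^ 2) • (1 : R) else 0 := fun s t hs ht => by
    rcases eq_or_ne s t with rfl | hst
    · rw [if_pos rfl, smul_mul_smul_comm, he.mul_self s (by omega) (by omega), ← two_smul ℝ]
      module
    · rw [if_neg hst, smul_mul_smul_comm, smul_mul_smul_comm,
        he.anticomm s t (by omega) (by omega) (by omega) (by omega) (Fin.val_injective.ne hst)]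
      module
  have hdouble : (2 : ℝ) • (vecQ e m p x * vecQ e m p x) = (2 : ℝ) • -normSqQ m p x • (1 : R) := by
    rw [two_smul, vecQ_apply, Finset.sum_mul_sum]
    nth_rw 2 [Finset.sum_comm]
    rw [← Finset.sum_add_distrib, normSqQ, ← Finset.sum_neg_distrib, Finset.sum_smul,
      Finset.smul_sum]
    refine Finset.sum_congr rfl fun s hs => ?_
    rw [← Finset.sum_add_distrib, Finset.sum_eq_single_of_mem s hs fun t ht hts => ?_]
    · rw [hterm s s (mem_qIndices.1 hs) (mem_qIndices.1 hs), if_pos rfl]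
      module
    · rw [hterm s t (mem_qIndices.1 hs) (mem_qIndices.1 ht), if_neg hts.symm]
  exact smul_right_injective R two_ne_zero hdouble

theorem norm_fderiv_pow_le [NormOneClass R] {E : Type*} [NormedAddCommGroup E] [NormedSpace ℝ E]
    (T : E →L[ℝ] R) (k : ℕ) (x : E) :
    ‖fderiv ℝ (fun x => T x ^ k) x‖ ≤ k * ‖T x‖ ^ (k - 1) * ‖T‖ := by
  have hderiv : HasFDerivAt (fun x => T x ^ k) _ x := T.hasFDerivAt.pow' k
  rw [hderiv.fderiv]
  calc _ ≤ ∑ _i ∈ Finset.range k, ‖T x‖ ^ (k - 1) * ‖T‖ := norm_sum_le_of_le _ fun i hi => by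
        refine ContinuousLinearMap.opNorm_le_bound _ (by positivity) fun w => ?_
        have hk : k - 1 = k.pred - i + i := by
          have := Finset.mem_range.1 hi
          rw [Nat.pred_eq_sub_one]
          omega
        calc ‖T x ^ (k.pred - i) * T w * T x ^ i‖
            ≤ ‖T x‖ ^ (k.pred - i) * (‖T‖ * ‖w‖) * ‖T x‖ ^ i := by
              refine (norm_mul_le _ _).trans ?_
              gcongr
              · refine (norm_mul_le _ _).trans ?_
                gcongr
                exacts [norm_pow_le _ _, T.le_opNorm w]
              · exact norm_pow_le _ _
          _ = ‖T x‖ ^ (k - 1) * ‖T‖ * ‖w‖ := by rw [hk, pow_add]; ring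
    _ = k * ‖T x‖ ^ (k - 1) * ‖T‖ := by simp [mul_assoc]

theorem hasFDerivAt_normSqQ (x : Fin (m + 1) → ℝ) :
    HasFDerivAt (normSqQ m p) (∑ s ∈ qIndices m p,
      (2 * x s) • (ContinuousLinearMap.proj s : (Fin (m + 1) → ℝ) →L[ℝ] ℝ)) x := by
  unfold normSqQ
  refine HasFDerivAt.fun_sum fun s _ => ?_
  simpa using (hasFDerivAt_apply (𝕜 := ℝ) s x).pow 2

theorem IsCliffordSystem.basis_mul_fderiv_vecQ_pow_add_two (he : IsCliffordSystem e m) (k : ℕ)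
    (x : Fin (m + 1) → ℝ) {s : Fin (m + 1)} (hs : s ∈ qIndices m p) :
    e s * fderiv ℝ (fun x => vecQ e m p x ^ (k + 2)) x (Pi.single s 1) =
      -normSqQ m p x • (e s * fderiv ℝ (fun x => vecQ e m p x ^ k) x (Pi.single s 1)) -
        (2 : ℝ) • (x s • e s * vecQ e m p x ^ k) := by
  have hpow : (fun x => vecQ e m p x ^ (k + 2)) = fun x => -normSqQ m p x • vecQ e m p x ^ k := by
    funext x
    rw [pow_add, sq, he.vecQ_mul_self, mul_smul_comm, mul_one]
  have hderiv := (hasFDerivAt_normSqQ (p := p) x).fun_neg.fun_smul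
    (((vecQ e m p).differentiableAt (x := x)).fun_pow k).hasFDerivAt
  have hcoord : ∑ t ∈ qIndices m p, 2 * x t * (Pi.single s 1 : Fin (m + 1) → ℝ) t = 2 * x s := by
    rw [Finset.sum_eq_single_of_mem s hs fun t _ hts => by simp [hts]]
    simp
  rw [hpow, hderiv.fderiv]
  simp [hcoord, mul_add, sub_eq_add_neg]
  module

theorem IsCliffordSystem.sum_basis_mul_fderiv_vecQ_pow (he : IsCliffordSystem e m) (hp : p ≤ m)
    (k : ℕ) (x : Fin (m + 1) → ℝ) :
    ∑ s ∈ qIndices m p, e s * fderiv ℝ (fun x => vecQ e m p x ^ k) x (Pi.single s 1) =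
      -ckFactor (m - p) k • vecQ e m p x ^ (k - 1) := by
  induction k using Nat.twoStepInduction with
  | zero => simp [ckFactor_zero]
  | one =>
    have hterm : ∀ s ∈ qIndices m p,
        e s * fderiv ℝ (fun x => vecQ e m p x ^ 1) x (Pi.single s 1) = -1 := fun s hs => by
      simp only [pow_one, ContinuousLinearMap.fderiv, vecQ_single, mem_qIndices.1 hs,
        if_true, one_smul]
      exact he.mul_self s (by have := mem_qIndices.1 hs; omega) (by omega)
    rw [Finset.sum_congr rfl hterm, Finset.sum_const, card_qIndices hp, ckFactor_one]
    simp [← Nat.cast_smul_eq_nsmul ℝ]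
  | more k ih _ =>
    have hlow : ckFactor (m - p) k • -normSqQ m p x • vecQ e m p x ^ (k - 1) =
        ckFactor (m - p) k • vecQ e m p x ^ (k + 1) := by
      cases k with
      | zero => simp [ckFactor_zero]
      | succ k =>
        rw [add_tsub_cancel_right, pow_add _ k 2, sq, he.vecQ_mul_self, mul_smul_comm, mul_one]
    rw [Finset.sum_congr rfl fun s hs => he.basis_mul_fderiv_vecQ_pow_add_two k x hs,
      Finset.sum_sub_distrib, ← Finset.smul_sum, ih, ← Finset.smul_sum, ← Finset.sum_mul,
      ← vecQ_apply, ← pow_succ', ckFactor_add_two, smul_comm, neg_smul, hlow,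
      show k + 2 - 1 = k + 1 from rfl]
    module

end CliffordSystem

section DiracOperator

variable {V : Type*} [NormedAddCommGroup V] [NormedSpace ℝ V] {L : ℕ → V →L[ℝ] V} {n : ℕ}

/-- The principal symbol `B ↦ ∑ L_s B(e_s)` of the Dirac operator `∑ L_s ∂_s`, whose coefficients
are the operators `L_s`. -/
noncomputable def diracSymbol (L : ℕ → V →L[ℝ] V) (n : ℕ) :
    ((Fin (n + 1) → ℝ) →L[ℝ] V) →L[ℝ] V :=
  ∑ s : Fin (n + 1), (L s).comp (ContinuousLinearMap.apply ℝ V (Pi.single s 1))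

theorem diracSymbol_apply (B : (Fin (n + 1) → ℝ) →L[ℝ] V) :
    diracSymbol L n B = ∑ s : Fin (n + 1), L s (B (Pi.single s 1)) := by
  simp [diracSymbol]

theorem norm_diracSymbol_le : ‖diracSymbol L n‖ ≤ ∑ s : Fin (n + 1), ‖L s‖ :=
  ContinuousLinearMap.opNorm_le_bound _ (by positivity) fun B => by
    rw [diracSymbol_apply, Finset.sum_mul]
    refine norm_sum_le_of_le _ fun s _ => ((L s).le_opNorm _).trans ?_
    gcongr
    simpa [Pi.norm_single] using B.le_opNorm (Pi.single s 1)

/-- The Dirac operator `∑ L_s ∂_s` on functions on `ℝ^{n+1}`. -/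
noncomputable def dirac (L : ℕ → V →L[ℝ] V) (n : ℕ) (g : (Fin (n + 1) → ℝ) → V)
    (y : Fin (n + 1) → ℝ) : V :=
  diracSymbol L n (fderiv ℝ g y)

theorem dirac_const_smul (c : ℝ) (g : (Fin (n + 1) → ℝ) → V) :
    dirac L n (fun y => c • g y) = fun y => c • dirac L n g y := by
  funext y
  rw [dirac, show (fun y => c • g y) = c • g from rfl, fderiv_const_smul_field, Pi.smul_apply,
    map_smul, dirac]

theorem norm_twist (k s : ℕ) : ‖twist L k s‖ = ‖L s‖ := by
  rcases Nat.even_or_odd k with hk | hk <;> simp [twist, hk.neg_one_pow, apply_ite norm]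

theorem diracSymbol_diracSymbol_of_symmetric {L L' : ℕ → V →L[ℝ] V}
    (h : ∀ s t : Fin (n + 1), L' s * L t + L' t * L s = if s = t then 2 else 0)
    {B : (Fin (n + 1) → ℝ) →L[ℝ] (Fin (n + 1) → ℝ) →L[ℝ] V} (hB : ∀ x y, B x y = B y x) :
    diracSymbol L' n ((diracSymbol L n).comp B) =
      ∑ s, B (Pi.single s 1) (Pi.single s 1) := by
  have hdouble : (2 : ℝ) • diracSymbol L' n ((diracSymbol L n).comp B) =
      (2 : ℝ) • ∑ s, B (Pi.single s 1) (Pi.single s 1) := by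
    simp only [diracSymbol_apply, ContinuousLinearMap.comp_apply, map_sum, two_smul]
    nth_rw 2 [Finset.sum_comm]
    rw [← Finset.sum_add_distrib, ← Finset.sum_add_distrib]
    refine Finset.sum_congr rfl fun s _ => ?_
    have hterm : ∀ t : Fin (n + 1), L' s (L t (B (Pi.single s 1) (Pi.single t 1))) +
        L' t (L s (B (Pi.single t 1) (Pi.single s 1))) =
          (if s = t then 2 else 0 : V →L[ℝ] V) (B (Pi.single s 1) (Pi.single t 1)) := fun t => by
      rw [hB (Pi.single t 1), ← h s t]
      rfl
    rw [← Finset.sum_add_distrib, Finset.sum_congr rfl fun t _ => hterm t,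
      Finset.sum_eq_single_of_mem s (Finset.mem_univ s) fun t _ hts => by simp [hts.symm]]
    simp [← one_add_one_eq_two]
  exact smul_right_injective V two_ne_zero hdouble

theorem IsCliffordSystem.dirac_dirac {m p : ℕ} (hL : IsCliffordSystem L m)
    (hp : p ≤ m) (k : ℕ) {g : (Fin (p + 1) → ℝ) → V} {y : Fin (p + 1) → ℝ}
    (hg : ContDiffAt ℝ 2 g y) :
    dirac (twist L (k + 1)) p (dirac (twist L k) p g) y = lapP p g y := by
  have hdiff : HasFDerivAt (fderiv ℝ g) (fderiv ℝ (fderiv ℝ g) y) y :=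
    ((hg.fderiv_right (m := 1) (by norm_num)).differentiableAt one_ne_zero).hasFDerivAt
  have hdirac : fderiv ℝ (dirac (twist L k) p g) y =
      (diracSymbol (twist L k) p).comp (fderiv ℝ (fderiv ℝ g) y) :=
    ((diracSymbol (twist L k) p).hasFDerivAt.comp y hdiff).fderiv
  rw [dirac, hdirac, diracSymbol_diracSymbol_of_symmetric (fun s t => ?_)
    (hg.isSymmSndFDerivAt (by simp))]
  · refine Finset.sum_congr rfl fun s _ => ?_
    unfold pdP
    simp [(hdiff.clm_apply (hasFDerivAt_const (Pi.single s (1 : ℝ)) y)).fderiv]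
  · simpa only [Fin.ext_iff] using
      hL.twist_mul_twist_add (s := s) (t := t) (by omega) (by omega) k

end DiracOperator

section Laplacian

variable {V : Type*} [NormedAddCommGroup V] [NormedSpace ℝ V] {p : ℕ}

theorem lapP_const_smul (c : ℝ) (g : (Fin (p + 1) → ℝ) → V) (y : Fin (p + 1) → ℝ) :
    lapP p (fun y => c • g y) y = c • lapP p g y := by
  have hpd : ∀ (s : Fin (p + 1)) (g : (Fin (p + 1) → ℝ) → V),
      pdP p s (fun y => c • g y) = fun y => c • pdP p s g y := fun s g => by
    funext y
    rw [pdP, show (fun y => c • g y) = c • g from rfl, fderiv_const_smul_field]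
    rfl
  simp only [lapP, hpd, Finset.smul_sum]

theorem lapP_congr_of_eventuallyEq {g g' : (Fin (p + 1) → ℝ) → V} {y : Fin (p + 1) → ℝ}
    (h : g =ᶠ[𝓝 y] g') : lapP p g y = lapP p g' y :=
  Finset.sum_congr rfl fun s _ => congrArg (fun T : (Fin (p + 1) → ℝ) →L[ℝ] V => T (Pi.single s 1))
    (h.fderiv.fun_comp fun T => T (Pi.single s 1)).fderiv_eq

theorem lapIterP_succ (k : ℕ) (g : (Fin (p + 1) → ℝ) → V) :
    lapIterP p (k + 1) g = lapP p (lapIterP p k g) :=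
  Function.iterate_succ_apply' ..

end Laplacian

section CKCoefficients

variable {V : Type*} [NormedAddCommGroup V] [NormedSpace ℝ V] {L : ℕ → V →L[ℝ] V} {p q : ℕ}
  {f : (Fin (p + 1) → ℝ) → V}

/-- The coefficients of the generalized CK-extension of `f`: the only sequence for which
`∑ x_q ^ k a_k(x_p)` is formally annihilated by the Dirac operator. -/
noncomputable def ckCoeff (L : ℕ → V →L[ℝ] V) (p q : ℕ) (f : (Fin (p + 1) → ℝ) → V) :
    ℕ → (Fin (p + 1) → ℝ) → V
  | 0 => f
  | k + 1 => fun y => (ckFactor q (k + 1))⁻¹ • dirac (twist L k) p (ckCoeff L p q f k) y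

theorem ckCoeff_succ (k : ℕ) : ckCoeff L p q f (k + 1) = fun y =>
    ((ckFactor q (k + 1))⁻¹ • diracSymbol (twist L k) p) (fderiv ℝ (ckCoeff L p q f k) y) :=
  rfl

theorem analyticAt_ckCoeff [CompleteSpace V] {y : Fin (p + 1) → ℝ} (hf : AnalyticAt ℝ f y)
    (k : ℕ) : AnalyticAt ℝ (ckCoeff L p q f k) y :=
  analyticAt_of_recursion ckCoeff_succ hf k

theorem exists_hasGeometricBound_ckCoeff [CompleteSpace V] (hq : 1 ≤ q) {y₀ : Fin (p + 1) → ℝ}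
    (hf : AnalyticAt ℝ f y₀) : ∃ ε > 0, ∃ C, ∃ R ≥ 0,
      HasGeometricBound (ckCoeff L p q f) (Metric.ball y₀ ε) C R := by
  refine exists_hasGeometricBound_of_recursion ckCoeff_succ
    (K := ∑ s : Fin (p + 1), ‖L s‖) (fun k => ?_) hf
  have hk : (k + 1 : ℝ) ≤ ckFactor q (k + 1) := by exact_mod_cast le_ckFactor hq (k + 1)
  have hk₀ : 0 ≤ ckFactor q (k + 1) := hk.trans' (by positivity)
  refine (ContinuousLinearMap.opNorm_smul_le _ _).trans ?_
  rw [norm_inv, Real.norm_of_nonneg hk₀, div_eq_inv_mul]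
  gcongr
  simpa only [norm_twist] using! norm_diracSymbol_le (L := twist L k) (n := p)

theorem IsCliffordSystem.ckCoeff_add_two [CompleteSpace V] {m : ℕ}
    (hL : IsCliffordSystem L m) (hp : p ≤ m) {y : Fin (p + 1) → ℝ}
    (hf : AnalyticAt ℝ f y) (k : ℕ) :
    ckCoeff L p q f (k + 2) y =
      ((ckFactor q (k + 2))⁻¹ * (ckFactor q (k + 1))⁻¹) • lapP p (ckCoeff L p q f k) y := by
  rw [← hL.dirac_dirac hp k (analyticAt_ckCoeff hf k).contDiffAt, mul_smul]
  simp only [ckCoeff, dirac_const_smul]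

theorem IsCliffordSystem.ckCoeff_two_mul [CompleteSpace V] {m : ℕ}
    (hL : IsCliffordSystem L m) (hp : p ≤ m) (hq : 1 ≤ q)
    {Ω₀ : Set (Fin (p + 1) → ℝ)} (hΩ₀ : IsOpen Ω₀) (hf : AnalyticOnNhd ℝ f Ω₀) (k : ℕ) :
    Set.EqOn (ckCoeff L p q f (2 * k)) (fun y => (Real.Gamma ((q : ℝ) / 2) /
      (2 ^ (2 * k) * (k.factorial : ℝ) * Real.Gamma ((k : ℝ) + (q : ℝ) / 2))) •
        lapIterP p k f y) Ω₀ := by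
  have : (0 : ℝ) < q := by exact_mod_cast hq
  induction k with
  | zero =>
    intro y _
    have hGamma : Real.Gamma ((q : ℝ) / 2) ≠ 0 := (Real.Gamma_pos_of_pos (by positivity)).ne'
    simp [ckCoeff, lapIterP, hGamma]
  | succ k ih =>
    intro y hy
    have hGamma : Real.Gamma (((k + 1 : ℕ) : ℝ) + (q : ℝ) / 2) =
        ((k : ℝ) + q / 2) * Real.Gamma ((k : ℝ) + (q : ℝ) / 2) := by
      rw [← Real.Gamma_add_one (by positivity)]
      push_cast
      ring_nf
    rw [show 2 * (k + 1) = 2 * k + 2 by ring, hL.ckCoeff_add_two hp (hf y hy),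
      lapP_congr_of_eventuallyEq (ih.eventuallyEq_of_mem (hΩ₀.mem_nhds hy)), lapP_const_smul,
      smul_smul]
    simp only [lapIterP_succ, ckFactor_add_two, ckFactor_two_mul, ckFactor_two_mul_add_one, hGamma]
    congr 1
    rw [Nat.factorial_succ, pow_add]
    push_cast
    field_simp

theorem IsCliffordSystem.ckCoeff_two_mul_add_one [CompleteSpace V] {m : ℕ}
    (hL : IsCliffordSystem L m) (hp : p ≤ m) (hq : 1 ≤ q)
    {Ω₀ : Set (Fin (p + 1) → ℝ)} (hΩ₀ : IsOpen Ω₀) (hf : AnalyticOnNhd ℝ f Ω₀) (k : ℕ) :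
    Set.EqOn (ckCoeff L p q f (2 * k + 1)) (fun y => (Real.Gamma ((q : ℝ) / 2) /
      (2 ^ (2 * k + 1) * (k.factorial : ℝ) * Real.Gamma ((k : ℝ) + (q : ℝ) / 2 + 1))) •
        lapIterP p k (dirac L p f) y) Ω₀ := by
  have : (0 : ℝ) < q := by exact_mod_cast hq
  induction k with
  | zero =>
    intro y _
    have hGamma := Real.Gamma_add_one (s := (q : ℝ) / 2) (by positivity)
    have htwist : twist L 0 = L := by funext s; simp [twist]
    simp only [ckCoeff, lapIterP, htwist, ckFactor_one, mul_zero, zero_add, Nat.cast_zero, hGamma,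
      Function.iterate_zero_apply, Nat.factorial_zero, pow_one, Nat.cast_one]
    congr 1
    field_simp
  | succ k ih =>
    intro y hy
    have hGamma : Real.Gamma (((k + 1 : ℕ) : ℝ) + (q : ℝ) / 2 + 1) =
        ((k : ℝ) + q / 2 + 1) * Real.Gamma ((k : ℝ) + (q : ℝ) / 2 + 1) := by
      rw [← Real.Gamma_add_one (by positivity)]
      push_cast
      ring_nf
    rw [show 2 * (k + 1) + 1 = 2 * k + 1 + 2 by ring, hL.ckCoeff_add_two hp (hf y hy),
      lapP_congr_of_eventuallyEq (ih.eventuallyEq_of_mem (hΩ₀.mem_nhds hy)), lapP_const_smul,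
      smul_smul]
    simp only [lapIterP_succ, show 2 * k + 1 + 1 = 2 * k + 2 by ring, ckFactor_add_two,
      ckFactor_two_mul, ckFactor_two_mul_add_one, hGamma]
    congr 1
    rw [Nat.factorial_succ, pow_add _ (2 * k + 1)]
    push_cast
    field_simp

end CKCoefficients

section OperatorPowerSeries

variable {E F V : Type*} [NormedAddCommGroup E] [NormedSpace ℝ E] [NormedAddCommGroup F]
  [NormedSpace ℝ F] [NormedAddCommGroup V] [NormedSpace ℝ V] {T : E →L[ℝ] (V →L[ℝ] V)}
  {P : E →L[ℝ] F} {a : ℕ → F → V} {s : Set F} {C R η : ℝ}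

/-- The tube `{x | P x ∈ s, ‖T x‖ < η}`, on which the series `∑ (T x) ^ k (a k (P x))` converges as
soon as the `a k` grow more slowly than `η ^ (-k)` on `s`. -/
def tube (T : E →L[ℝ] (V →L[ℝ] V)) (P : E →L[ℝ] F) (s : Set F) (η : ℝ) : Set E :=
  {x | P x ∈ s ∧ ‖T x‖ < η}

theorem isOpen_tube (hs : IsOpen s) : IsOpen (tube T P s η) :=
  (hs.preimage P.continuous).inter (isOpen_lt T.continuous.norm continuous_const)

theorem convex_tube (hs : Convex ℝ s) : Convex ℝ (tube T P s η) := by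
  have h := (hs.linear_preimage P.toLinearMap).inter
    ((convex_ball (0 : V →L[ℝ] V) η).linear_preimage T.toLinearMap)
  convert h using 1
  ext x
  simp [tube]

theorem summable_natCast_mul_pow_sub_one {r : ℝ} (hr₀ : 0 ≤ r) (hr : r < 1) :
    Summable fun k : ℕ => k * r ^ (k - 1) := by
  rw [← summable_nat_add_iff 1]
  have hr' : ‖r‖ < 1 := by rwa [Real.norm_of_nonneg hr₀]
  have hk : Summable fun k : ℕ => (k : ℝ) * r ^ k := by
    simpa using summable_pow_mul_geometric_of_norm_lt_one 1 hr'
  refine (hk.add (summable_geometric_of_norm_lt_one hr')).congr fun k => ?_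
  rw [add_tsub_cancel_right]
  push_cast
  ring

theorem hasFDerivAt_pow_apply {g : F → V} {x : E} (hg : DifferentiableAt ℝ g (P x)) (k : ℕ) :
    HasFDerivAt (fun x => (T x ^ k) (g (P x)))
      ((T x ^ k).comp ((fderiv ℝ g (P x)).comp P) +
        (fderiv ℝ (fun x => T x ^ k) x).flip (g (P x))) x :=
  (T.differentiableAt.fun_pow k).hasFDerivAt.clm_apply (hg.hasFDerivAt.comp x P.hasFDerivAt)

theorem contDiffAt_pow_apply {g : F → V} {x : E} (hg : ContDiffAt ℝ 1 g (P x)) (k : ℕ) :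
    ContDiffAt ℝ 1 (fun x => (T x ^ k) (g (P x))) x :=
  (T.contDiff.contDiffAt.pow k).clm_apply (hg.comp x P.contDiff.contDiffAt)

variable [Nontrivial V]

theorem norm_pow_apply_le {S : V →L[ℝ] V} {b : V} {k : ℕ} (hS : ‖S‖ ≤ η) (hb : ‖b‖ ≤ C * R ^ k) :
    ‖(S ^ k) b‖ ≤ C * (η * R) ^ k := by
  have hη : 0 ≤ η := (norm_nonneg S).trans hS
  calc ‖(S ^ k) b‖ ≤ ‖S‖ ^ k * ‖b‖ := (S ^ k).le_of_opNorm_le (norm_pow_le S k) b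
    _ ≤ η ^ k * (C * R ^ k) := by gcongr
    _ = C * (η * R) ^ k := by rw [mul_pow]; ring

theorem summable_pow_apply {S : V →L[ℝ] V} {b : ℕ → V} [CompleteSpace V] (hR : 0 ≤ R)
    (hη : η * R < 1) (hS : ‖S‖ ≤ η) (hb : ∀ k, ‖b k‖ ≤ C * R ^ k) :
    Summable fun k => (S ^ k) (b k) :=
  .of_norm_bounded ((summable_geometric_of_lt_one
    (mul_nonneg ((norm_nonneg S).trans hS) hR) hη).mul_left C)
      fun k => norm_pow_apply_le hS (hb k)

namespace HasGeometricBound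

theorem norm_fderiv_pow_apply_le (ha : HasGeometricBound a s C R) {x : E}
    (hx : x ∈ tube T P s η) (k : ℕ) :
    ‖fderiv ℝ (fun x => (T x ^ k) (a k (P x))) x‖ ≤
      C * (η * R) ^ k * ‖P‖ + C * R * ‖T‖ * (k * (η * R) ^ (k - 1)) := by
  have hη : 0 ≤ η := (norm_nonneg _).trans hx.2.le
  rw [(hasFDerivAt_pow_apply ((ha.contDiffAt k _ hx.1).differentiableAt one_ne_zero) k).fderiv]
  refine (norm_add_le _ _).trans (add_le_add ?_ ?_)
  · calc _ ≤ ‖T x‖ ^ k * (‖fderiv ℝ (a k) (P x)‖ * ‖P‖) := by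
          refine (ContinuousLinearMap.opNorm_comp_le _ _).trans ?_
          gcongr
          exacts [norm_pow_le _ _, ContinuousLinearMap.opNorm_comp_le _ _]
      _ ≤ η ^ k * (C * R ^ k * ‖P‖) := by
          gcongr
          exacts [hx.2.le, ha.norm_fderiv_le k _ hx.1]
      _ = C * (η * R) ^ k * ‖P‖ := by rw [mul_pow]; ring
  · calc _ ≤ k * ‖T x‖ ^ (k - 1) * ‖T‖ * ‖a k (P x)‖ := by
          refine (ContinuousLinearMap.le_opNorm _ _).trans ?_
          rw [ContinuousLinearMap.opNorm_flip]
          gcongr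
          exact norm_fderiv_pow_le T k x
      _ ≤ k * η ^ (k - 1) * ‖T‖ * (C * R ^ k) := by
          gcongr
          exacts [hx.2.le, ha.norm_le k _ hx.1]
      _ = C * R * ‖T‖ * (k * (η * R) ^ (k - 1)) := by
          cases k with
          | zero => simp
          | succ k => rw [add_tsub_cancel_right, mul_pow, pow_succ]; ring

variable (ha : HasGeometricBound a s C R) (hR : 0 ≤ R) (hη : η * R < 1)
include ha hR hη

theorem exists_summable_norm_fderiv_le : ∃ u : ℕ → ℝ, Summable u ∧ ∀ k, ∀ x ∈ tube T P s η,
    ‖fderiv ℝ (fun x => (T x ^ k) (a k (P x))) x‖ ≤ u k := by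
  rcases (tube T P s η).eq_empty_or_nonempty with h | ⟨x₀, hx₀⟩
  · exact ⟨0, summable_zero, by simp [h]⟩
  have hηR : 0 ≤ η * R := mul_nonneg ((norm_nonneg _).trans hx₀.2.le) hR
  exact ⟨_, (((summable_geometric_of_lt_one hηR hη).mul_left C).mul_right ‖P‖).add
    ((summable_natCast_mul_pow_sub_one hηR hη).mul_left (C * R * ‖T‖)),
    fun k x hx => ha.norm_fderiv_pow_apply_le hx k⟩

variable [CompleteSpace V]

theorem hasFDerivAt_tsum (hs : IsOpen s) (hs' : Convex ℝ s) {x : E} (hx : x ∈ tube T P s η) :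
    HasFDerivAt (fun x => ∑' k, (T x ^ k) (a k (P x)))
      (∑' k, fderiv ℝ (fun x => (T x ^ k) (a k (P x))) x) x := by
  obtain ⟨u, hu, hle⟩ := ha.exists_summable_norm_fderiv_le (T := T) (P := P) hR hη
  exact hasFDerivAt_tsum_of_isPreconnected hu (isOpen_tube hs) (convex_tube hs').isPreconnected
    (fun k x hx => ((contDiffAt_pow_apply (ha.contDiffAt k _ hx.1) k).differentiableAt
      one_ne_zero).hasFDerivAt) hle hx
    (summable_pow_apply hR hη hx.2.le fun k => ha.norm_le k _ hx.1) hx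

theorem contDiffOn_tsum (hs : IsOpen s) (hs' : Convex ℝ s) :
    ContDiffOn ℝ 1 (fun x => ∑' k, (T x ^ k) (a k (P x))) (tube T P s η) := by
  obtain ⟨u, hu, hle⟩ := ha.exists_summable_norm_fderiv_le (T := T) (P := P) hR hη
  have hderiv := fun x => ha.hasFDerivAt_tsum (T := T) (P := P) (x := x) hR hη hs hs'
  have hcont : ContinuousOn (fun x => ∑' k, fderiv ℝ (fun x => (T x ^ k) (a k (P x))) x)
      (tube T P s η) :=
    continuousOn_tsum (fun k x hx => ((contDiffAt_pow_apply (ha.contDiffAt k _ hx.1) k).fderiv_right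
      (m := 0) le_rfl).continuousAt.continuousWithinAt) hu hle
  rw [show (1 : WithTop ℕ∞) = 0 + 1 from rfl, contDiffOn_succ_iff_fderiv_of_isOpen (isOpen_tube hs)]
  exact ⟨fun x hx => (hderiv x hx).differentiableAt.differentiableWithinAt, by simp,
    contDiffOn_zero.2 <| hcont.congr fun x hx => (hderiv x hx).fderiv⟩

end HasGeometricBound

end OperatorPowerSeries

section DiracSeries

variable {V : Type*} [NormedAddCommGroup V] [NormedSpace ℝ V] {L : ℕ → V →L[ℝ] V} {m p : ℕ}

/-- `projP`, the projection `x ↦ x_p`, as a continuous linear map. -/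
noncomputable def projPL (m p : ℕ) : (Fin (m + 1) → ℝ) →L[ℝ] (Fin (p + 1) → ℝ) :=
  LinearMap.toContinuousLinearMap
    { toFun := projP m p
      map_add' := fun x y => by funext s; by_cases h : (s : ℕ) < m + 1 <;> simp [projP, h]
      map_smul' := fun c x => by funext s; by_cases h : (s : ℕ) < m + 1 <;> simp [projP, h] }

theorem projPL_apply (x : Fin (m + 1) → ℝ) : projPL m p x = projP m p x := rfl

theorem projPL_single_of_lt {s : Fin (m + 1)} (hs : p < (s : ℕ)) (t : ℝ) :
    projPL m p (Pi.single s t) = 0 := by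
  funext i
  rw [projPL_apply, projP]
  split_ifs with h
  · exact Pi.single_eq_of_ne (fun his => by simp [← his] at hs; omega) _
  · rfl

theorem projPL_single_castLE (hp : p + 1 ≤ m + 1) (s : Fin (p + 1)) (t : ℝ) :
    projPL m p (Pi.single (Fin.castLE hp s) t) = Pi.single s t := by
  funext i
  have hi : (i : ℕ) < m + 1 := by omega
  rw [projPL_apply, projP, dif_pos hi]
  simp [Pi.single_apply, Fin.ext_iff]

theorem fderiv_vecQ_pow_single_of_le {s : Fin (m + 1)} (hs : (s : ℕ) ≤ p) (k : ℕ)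
    (x : Fin (m + 1) → ℝ) : fderiv ℝ (fun x => vecQ L m p x ^ k) x (Pi.single s 1) = 0 := by
  have h : HasFDerivAt (fun x => vecQ L m p x ^ k) _ x := (vecQ L m p).hasFDerivAt.pow' k
  rw [h.fderiv]
  simp [vecQ_single, hs.not_gt]

theorem diracSymbol_comp_projPL (hp : p ≤ m) (B : (Fin (p + 1) → ℝ) →L[ℝ] V) :
    diracSymbol L m (B.comp (projPL m p)) = diracSymbol L p B := by
  rw [diracSymbol_apply, diracSymbol_apply]
  refine (Fintype.sum_of_injective _ (Fin.castLE_injective (Nat.succ_le_succ hp)) _ _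
    (fun s hs => ?_) fun s => ?_).symm
  · rw [ContinuousLinearMap.comp_apply, projPL_single_of_lt (lt_of_not_ge fun h =>
      hs ⟨⟨s, by omega⟩, rfl⟩), map_zero, map_zero]
  · simp [projPL_single_castLE]

theorem IsCliffordSystem.diracSymbol_vecQ_pow_comp (hL : IsCliffordSystem L m)
    (x : Fin (m + 1) → ℝ) (k : ℕ) (B : (Fin (p + 1) → ℝ) →L[ℝ] V) :
    diracSymbol L p ((vecQ L m p x ^ k).comp B) =
      (vecQ L m p x ^ k) (diracSymbol (twist L k) p B) := by
  rw [diracSymbol_apply, diracSymbol_apply, map_sum]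
  exact Finset.sum_congr rfl fun s _ => congrArg (fun S : V →L[ℝ] V => S (B (Pi.single s 1)))
    (hL.basis_mul_vecQ_pow (Nat.le_of_lt_succ s.is_lt) x k)

theorem IsCliffordSystem.diracSymbol_flip_fderiv_vecQ_pow (hL : IsCliffordSystem L m)
    (hp : p ≤ m) (x : Fin (m + 1) → ℝ) (k : ℕ) (b : V) :
    diracSymbol L m ((fderiv ℝ (fun x => vecQ L m p x ^ k) x).flip b) =
      -ckFactor (m - p) k • (vecQ L m p x ^ (k - 1)) b := by
  rw [diracSymbol_apply, ← Finset.sum_subset (Finset.subset_univ (qIndices m p)) fun s _ hs => ?_]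
  · simpa using congrArg (fun S : V →L[ℝ] V => S b) (hL.sum_basis_mul_fderiv_vecQ_pow hp k x)
  · rw [mem_qIndices, not_lt] at hs
    simp [fderiv_vecQ_pow_single_of_le hs]

theorem IsCliffordSystem.dirac_vecQ_pow_apply (hL : IsCliffordSystem L m) (hp : p ≤ m) (k : ℕ)
    {g : (Fin (p + 1) → ℝ) → V} {x : Fin (m + 1) → ℝ}
    (hg : DifferentiableAt ℝ g (projPL m p x)) :
    dirac L m (fun x => (vecQ L m p x ^ k) (g (projPL m p x))) x =
      (vecQ L m p x ^ k) (dirac (twist L k) p g (projPL m p x)) -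
        ckFactor (m - p) k • (vecQ L m p x ^ (k - 1)) (g (projPL m p x)) := by
  rw [dirac, (hasFDerivAt_pow_apply hg k).fderiv, map_add, ← ContinuousLinearMap.comp_assoc,
    diracSymbol_comp_projPL hp, hL.diracSymbol_vecQ_pow_comp,
    hL.diracSymbol_flip_fderiv_vecQ_pow hp, neg_smul, ← sub_eq_add_neg, dirac]

theorem norm_dirac_twist_le {a : ℕ → (Fin (p + 1) → ℝ) → V} {s : Set (Fin (p + 1) → ℝ)} {C R : ℝ}
    (ha : HasGeometricBound a s C R) {y : Fin (p + 1) → ℝ} (hy : y ∈ s) (k : ℕ) :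
    ‖dirac (twist L k) p (a k) y‖ ≤ (∑ i : Fin (p + 1), ‖L i‖) * C * R ^ k := by
  rw [mul_assoc]
  refine (ContinuousLinearMap.le_opNorm _ _).trans ?_
  gcongr
  · simpa only [norm_twist] using! norm_diracSymbol_le (L := twist L k) (n := p)
  · exact ha.norm_fderiv_le k y hy

variable [Nontrivial V] [CompleteSpace V]

theorem IsCliffordSystem.hasSum_dirac_tsum (hL : IsCliffordSystem L m) (hp : p ≤ m)
    {a : ℕ → (Fin (p + 1) → ℝ) → V} {s : Set (Fin (p + 1) → ℝ)} {C R η : ℝ}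
    (ha : HasGeometricBound a s C R) (hR : 0 ≤ R) (hη : η * R < 1) (hs : IsOpen s)
    (hs' : Convex ℝ s) {x : Fin (m + 1) → ℝ} (hx : x ∈ tube (vecQ L m p) (projPL m p) s η) :
    HasSum (fun k => (vecQ L m p x ^ k) (dirac (twist L k) p (a k) (projPL m p x) -
        ckFactor (m - p) (k + 1) • a (k + 1) (projPL m p x)))
      (dirac L m (fun x => ∑' k, (vecQ L m p x ^ k) (a k (projPL m p x))) x) := by
  obtain ⟨u, hu, hle⟩ := ha.exists_summable_norm_fderiv_le (T := vecQ L m p) (P := projPL m p)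
    hR hη
  have hsum := (diracSymbol L m).hasSum (hu.of_norm_bounded fun k => hle k x hx).hasSum
  rw [← (ha.hasFDerivAt_tsum hR hη hs hs' hx).fderiv] at hsum
  have hsub := hsum.congr_fun fun k => (hL.dirac_vecQ_pow_apply hp k (x := x)
    ((ha.contDiffAt k _ hx.1).differentiableAt one_ne_zero)).symm
  have hfst := (summable_pow_apply hR hη hx.2.le fun k =>
    norm_dirac_twist_le (L := L) ha hx.1 k).hasSum
  have hsnd := (hasSum_nat_add_iff' 1).2 <| (hfst.sub hsub).congr_fun fun k =>
    (sub_sub_cancel _ _).symm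
  simpa [ckFactor_zero, dirac, map_sub] using hfst.sub hsnd

theorem IsCliffordSystem.dirac_tsum_ckCoeff (hL : IsCliffordSystem L m) (hp : p < m)
    {f : (Fin (p + 1) → ℝ) → V} {s : Set (Fin (p + 1) → ℝ)} {C R η : ℝ}
    (ha : HasGeometricBound (ckCoeff L p (m - p) f) s C R) (hR : 0 ≤ R) (hη : η * R < 1)
    (hs : IsOpen s) (hs' : Convex ℝ s) {x : Fin (m + 1) → ℝ}
    (hx : x ∈ tube (vecQ L m p) (projPL m p) s η) :
    dirac L m (fun x => ∑' k, (vecQ L m p x ^ k) (ckCoeff L p (m - p) f k (projPL m p x))) x =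
      0 := by
  refine (hL.hasSum_dirac_tsum hp.le ha hR hη hs hs' hx).unique (hasSum_zero.congr_fun fun k => ?_)
  rw [ckCoeff, smul_inv_smul₀ (ckFactor_succ_ne_zero (Nat.sub_pos_of_lt hp) k), sub_self, map_zero]

end DiracSeries

section SymmetricDomain

variable {m p : ℕ}

theorem rad_eq_sqrt_normSqQ (x : Fin (m + 1) → ℝ) : rad m p x = √(normSqQ m p x) := by
  rw [rad, normSqQ, qIndices, Finset.sum_filter]
  congr 1
  refine Finset.sum_congr rfl fun s _ => ?_
  by_cases h : (s : ℕ) ≤ p <;> simp [xqpart, h, not_lt.2, not_le.1]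

theorem continuous_rad : Continuous (rad m p) := by
  simp only [funext rad_eq_sqrt_normSqQ, normSqQ]
  fun_prop

theorem abs_le_rad (x : Fin (m + 1) → ℝ) {s : Fin (m + 1)} (hs : s ∈ qIndices m p) :
    |x s| ≤ rad m p x := by
  rw [rad_eq_sqrt_normSqQ]
  exact Real.abs_le_sqrt
    (Finset.single_le_sum (f := fun s => x s ^ 2) (fun t _ => sq_nonneg (x t)) hs)

theorem rad_add_smul {z w w' : Fin (m + 1) → ℝ} (r : ℝ)
    (hz : ∀ s : Fin (m + 1), p < (s : ℕ) → z s = 0)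
    (hw : ∀ s : Fin (m + 1), p < (s : ℕ) → w s = w' s) :
    rad m p (z + r • w) = |r| * rad m p w' := by
  rw [rad_eq_sqrt_normSqQ, rad_eq_sqrt_normSqQ, ← Real.sqrt_sq_eq_abs,
    ← Real.sqrt_mul (sq_nonneg r), normSqQ, normSqQ, Finset.mul_sum]
  congr 1
  refine Finset.sum_congr rfl fun s hs => ?_
  simp [hz s (mem_qIndices.1 hs), hw s (mem_qIndices.1 hs), mul_pow]

theorem injP_of_lt (y : Fin (p + 1) → ℝ) (s : Fin (m + 1)) (hs : p < (s : ℕ)) :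
    injP m p y s = 0 := by
  simp [injP, hs]

theorem rad_injP (y : Fin (p + 1) → ℝ) : rad m p (injP m p y) = 0 := by
  simpa using rad_add_smul (w := 0) (w' := 0) 0 (injP_of_lt (m := m) y) fun _ _ => rfl

theorem projP_injP (hp : p ≤ m) (y : Fin (p + 1) → ℝ) : projP m p (injP m p y) = y := by
  funext s
  have : (s : ℕ) < m + 1 := by omega
  simp [projP, injP, this, Nat.le_of_lt_succ s.is_lt]

theorem continuous_injP : Continuous (injP m p) := by
  refine continuous_pi fun s => ?_
  simp only [injP]
  split_ifs <;> fun_prop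

theorem projP_add_smul (x : Fin (m + 1) → ℝ) (r : ℝ) {w : Fin (m + 1) → ℝ}
    (hw : ∀ s : Fin (m + 1), (s : ℕ) ≤ p → w s = 0) : projP m p (x + r • w) = projP m p x := by
  funext s
  by_cases h : (s : ℕ) < m + 1
  · simp [projP, h, hw ⟨s, h⟩ (Nat.le_of_lt_succ s.is_lt)]
  · simp [projP, h]

theorem projP_xppart (x : Fin (m + 1) → ℝ) : projP m p (xppart m p x) = projP m p x := by
  funext s
  simp [projP, xppart, Nat.le_of_lt_succ s.is_lt]

theorem isConnected_of_segment_subset {Y E : Type*} [TopologicalSpace Y] [NormedAddCommGroup E]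
    [NormedSpace ℝ E] {s : Set Y} (hs : IsConnected s) {j : Y → E} (hj : Continuous j) {t : Set E}
    (hst : j '' s ⊆ t) (ht : ∀ x ∈ t, ∃ y ∈ s, segment ℝ (j y) x ⊆ t) : IsConnected t := by
  obtain ⟨y₀, hy₀⟩ := hs.nonempty
  refine ⟨⟨j y₀, hst ⟨y₀, hy₀, rfl⟩⟩, isPreconnected_of_forall (j y₀) fun x hx => ?_⟩
  obtain ⟨y, hy, hseg⟩ := ht x hx
  exact ⟨j '' s ∪ segment ℝ (j y) x, Set.union_subset hst hseg, .inl ⟨y₀, hy₀, rfl⟩,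
    .inr (right_mem_segment _ _ _), (hs.isPreconnected.image _ hj.continuousOn).union (j y)
      ⟨y, hy, rfl⟩ (left_mem_segment _ _ _) (convex_segment _ _).isPreconnected⟩

variable {v : ℕ → A} {Ω₀ : Set (Fin (p + 1) → ℝ)} {Ω : Set (Fin (m + 1) → ℝ)}
  (hv : ∀ w ∈ Sph v m p, rad m p w = 1)
  (hΩ : ∀ x ∈ Ω, ∀ x', projP m p x' = projP m p x → rad m p x' ≤ rad m p x → x' ∈ Ω)
include hv hΩ

theorem pSym_of_forall_rad_le : PSym v m p Ω := fun x hx w hw => by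
  refine hΩ x hx _ ?_ ?_
  · rw [projP_add_smul _ _ hw.1, projP_xppart]
  · have hxp : ∀ s : Fin (m + 1), p < (s : ℕ) → xppart m p x s = 0 := fun s hs => by
      simp [xppart, hs]
    rw [rad_add_smul (rad m p x) hxp fun _ _ => rfl, hv w hw, mul_one,
      abs_of_nonneg (show 0 ≤ rad m p x from Real.sqrt_nonneg _)]

theorem isConnected_sliceSet_of_forall_rad_le (hp : p ≤ m) (hΩ₀ : IsConnected Ω₀)
    (hinj : injP m p '' Ω₀ ⊆ Ω) (hproj : Ω ⊆ Omega0star m p Ω₀) {w : Fin (m + 1) → ℝ}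
    (hw : w ∈ Sph v m p) : IsConnected (sliceSet m p Ω w) := by
  have hprojpt : ∀ y r, projP m p (pt m p w y r) = y := fun y r => by
    rw [pt, projP_add_smul _ _ hw.1, projP_injP hp]
  have hradpt : ∀ y r, rad m p (pt m p w y r) = |r| := fun y r => by
    rw [pt, rad_add_smul _ (injP_of_lt y) fun _ _ => rfl, hv w hw, mul_one]
  refine isConnected_of_segment_subset hΩ₀ (j := fun y => (y, (0 : ℝ))) (by fun_prop) ?_ ?_
  · rintro _ ⟨y, hy, rfl⟩
    simpa [sliceSet, pt] using hinj ⟨y, hy, rfl⟩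
  · rintro ⟨y, r⟩ hyr
    refine ⟨y, by simpa [Omega0star, hprojpt] using hproj hyr, ?_⟩
    rw [segment_eq_image']
    rintro _ ⟨t, ht, rfl⟩
    refine hΩ _ hyr _ (by simp [hprojpt]) ?_
    simpa [hradpt, abs_mul, abs_of_nonneg ht.1] using mul_le_of_le_one_left (abs_nonneg r) ht.2

theorem sliceDomain_of_forall_rad_le (hp : p ≤ m) (hΩ₀ : IsConnected Ω₀) (hopen : IsOpen Ω)
    (hinj : injP m p '' Ω₀ ⊆ Ω) (hproj : Ω ⊆ Omega0star m p Ω₀) : SliceDomain v m p Ω := by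
  refine ⟨hopen, ?_, ?_, fun w hw =>
    isConnected_sliceSet_of_forall_rad_le hv hΩ hp hΩ₀ hinj hproj hw⟩
  · refine isConnected_of_segment_subset hΩ₀ continuous_injP hinj fun x hx =>
      ⟨projP m p x, hproj hx, ?_⟩
    rw [segment_eq_image']
    rintro _ ⟨t, ht, rfl⟩
    refine hΩ x hx _ ?_ ?_
    · simp only [← projPL_apply, map_add, map_smul, map_sub]
      simp [projPL_apply, projP_injP hp]
    · dsimp only
      rw [rad_add_smul (w' := x) t (injP_of_lt _) fun s hs => by simp [injP_of_lt _ s hs],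
        abs_of_nonneg ht.1]
      exact mul_le_of_le_one_left (Real.sqrt_nonneg _) ht.2
  · obtain ⟨y, hy⟩ := hΩ₀.nonempty
    refine ⟨injP m p y, hinj ⟨y, hy, rfl⟩, funext fun s => ?_⟩
    by_cases hs : (s : ℕ) ≤ p <;> simp [xqpart, injP, hs, not_lt.2, not_le.1]

end SymmetricDomain

section Existence

variable {V : Type*} [NormedAddCommGroup V] [NormedSpace ℝ V] {L : ℕ → V →L[ℝ] V} {m p : ℕ}
  {Ω₀ : Set (Fin (p + 1) → ℝ)} {f : (Fin (p + 1) → ℝ) → V}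

theorem norm_vecQ_le (x : Fin (m + 1) → ℝ) :
    ‖vecQ L m p x‖ ≤ (∑ s ∈ qIndices m p, ‖L s‖) * rad m p x := by
  rw [vecQ_apply, Finset.sum_mul]
  refine norm_sum_le_of_le _ fun s hs => ?_
  rw [norm_smul, mul_comm, Real.norm_eq_abs]
  gcongr
  exact abs_le_rad x hs

/-- A domain of convergence of the generalized CK-extension of `f`: the union of the sets
`{x_p ∈ s, |x_q| < ρ}` on which the coefficients are geometrically bounded at a rate for which the
series can be differentiated termwise. -/
def ckDomain (L : ℕ → V →L[ℝ] V) (m p : ℕ) (Ω₀ : Set (Fin (p + 1) → ℝ))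
    (f : (Fin (p + 1) → ℝ) → V) : Set (Fin (m + 1) → ℝ) :=
  {x | ∃ s C R η, (IsOpen s ∧ Convex ℝ s ∧ s ⊆ Ω₀ ∧ 0 ≤ R ∧ η * R < 1 ∧
    HasGeometricBound (ckCoeff L p (m - p) f) s C R) ∧
      projP m p x ∈ s ∧ (∑ i ∈ qIndices m p, ‖L i‖) * rad m p x < η}

theorem isOpen_ckDomain : IsOpen (ckDomain L m p Ω₀ f) := by
  refine isOpen_iff_mem_nhds.2 fun x hx => ?_
  obtain ⟨s, C, R, η, hs, hxs, hxη⟩ := hx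
  filter_upwards [(projPL m p).continuous.continuousAt.preimage_mem_nhds (hs.1.mem_nhds hxs),
    (continuous_const.mul continuous_rad).continuousAt.eventually_lt_const hxη] with x' hx's hx'η
  exact ⟨s, C, R, η, hs, hx's, hx'η⟩

theorem ckDomain_subset : ckDomain L m p Ω₀ f ⊆ Omega0star m p Ω₀ := by
  rintro x ⟨s, C, R, η, ⟨-, -, hs, -⟩, hx, -⟩
  exact hs hx

theorem mem_ckDomain_of_rad_le {x x' : Fin (m + 1) → ℝ} (hx : x ∈ ckDomain L m p Ω₀ f)
    (hproj : projP m p x' = projP m p x) (hrad : rad m p x' ≤ rad m p x) :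
    x' ∈ ckDomain L m p Ω₀ f := by
  obtain ⟨s, C, R, η, hs, hxs, hxη⟩ := hx
  exact ⟨s, C, R, η, hs, hproj ▸ hxs, hxη.trans_le' (by gcongr)⟩

theorem injP_image_subset_ckDomain [CompleteSpace V] (hp : p < m) (hΩ₀ : IsOpen Ω₀)
    (hf : AnalyticOnNhd ℝ f Ω₀) : injP m p '' Ω₀ ⊆ ckDomain L m p Ω₀ f := by
  rintro _ ⟨y, hy, rfl⟩
  obtain ⟨ε, hε, C, R, hR, ha⟩ := exists_hasGeometricBound_ckCoeff (L := L) (q := m - p)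
    (Nat.sub_pos_of_lt hp) (hf y hy)
  obtain ⟨δ, hδ, hδΩ₀⟩ := Metric.isOpen_iff.1 hΩ₀ y hy
  have hη : (R + 1)⁻¹ * R < 1 := by
    rw [inv_mul_lt_one₀ (by positivity)]
    linarith
  refine ⟨Metric.ball y (min ε δ), C, R, (R + 1)⁻¹, ⟨Metric.isOpen_ball, convex_ball _ _,
    (Metric.ball_subset_ball (min_le_right _ _)).trans hδΩ₀, hR, hη,
    ha.mono (Metric.ball_subset_ball (min_le_left _ _))⟩, ?_, ?_⟩
  · rw [projP_injP hp.le]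
    exact Metric.mem_ball_self (lt_min hε hδ)
  · rw [rad_injP, mul_zero]
    positivity

/-- The series `∑ x_q ^ k B_k(x_p)` converges on `Ω` to a `C¹` function annihilated by the Dirac
operator. -/
structure HasMonogenicSum (L : ℕ → V →L[ℝ] V) (m p : ℕ) (B : ℕ → (Fin (p + 1) → ℝ) → V)
    (Ω : Set (Fin (m + 1) → ℝ)) : Prop where
  summable : ∀ x ∈ Ω, Summable fun k => (vecQ L m p x ^ k) (B k (projPL m p x))
  contDiffOn : ContDiffOn ℝ 1 (fun x => ∑' k, (vecQ L m p x ^ k) (B k (projPL m p x))) Ω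
  dirac_eq_zero : ∀ x ∈ Ω,
    dirac L m (fun x => ∑' k, (vecQ L m p x ^ k) (B k (projPL m p x))) x = 0

variable [Nontrivial V] [CompleteSpace V]

theorem IsCliffordSystem.hasMonogenicSum_ckCoeff (hL : IsCliffordSystem L m) (hp : p < m) :
    HasMonogenicSum L m p (ckCoeff L p (m - p) f) (ckDomain L m p Ω₀ f) where
  summable := by
    rintro x ⟨s, C, R, η, ⟨-, -, -, hR, hη, ha⟩, hxs, hxη⟩
    exact summable_pow_apply hR hη ((norm_vecQ_le x).trans hxη.le) fun k => ha.norm_le k _ hxs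
  contDiffOn := by
    rintro x ⟨s, C, R, η, ⟨hs, hs', -, hR, hη, ha⟩, hxs, hxη⟩
    exact ((ha.contDiffOn_tsum hR hη hs hs').contDiffAt
      ((isOpen_tube hs).mem_nhds ⟨hxs, (norm_vecQ_le x).trans_lt hxη⟩)).contDiffWithinAt
  dirac_eq_zero := by
    rintro x ⟨s, C, R, η, ⟨hs, hs', -, hR, hη, ha⟩, hxs, hxη⟩
    exact hL.dirac_tsum_ckCoeff hp ha hR hη hs hs' ⟨hxs, (norm_vecQ_le x).trans_lt hxη⟩

end Existence

section IntegrationByParts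

open MeasureTheory

variable {E V W : Type*} [NormedAddCommGroup E] [MeasurableSpace E] [BorelSpace E]
  [NormedAddCommGroup V] [NormedSpace ℝ V] [NormedAddCommGroup W] [NormedSpace ℝ W]
  {μ : Measure E} {U : Set E}

theorem integrable_clm_apply_of_tsupport_subset [IsFiniteMeasureOnCompacts μ]
    {K : E → V →L[ℝ] W} (hK : Continuous K) (hc : HasCompactSupport K) (hU : IsOpen U)
    (hKU : tsupport K ⊆ U) {g : E → V} (hg : ContinuousOn g U) :
    Integrable (fun y => K y (g y)) μ := by
  have hsupp : Function.support (fun y => K y (g y)) ⊆ Function.support K := fun y hy h₀ =>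
    hy (by simp [h₀])
  have hcont : Continuous fun y => K y (g y) := continuous_of_tsupport fun y hy =>
    hK.continuousAt.clm_apply (hg.continuousAt (hU.mem_nhds (hKU (closure_mono hsupp hy))))
  exact hcont.integrable_of_hasCompactSupport (hc.mono' (hsupp.trans subset_closure))

theorem tendsto_integral_clm_apply [IsFiniteMeasureOnCompacts μ]
    {K : E → V →L[ℝ] W} (hK : Continuous K) (hc : HasCompactSupport K) (hU : IsOpen U)
    (hKU : tsupport K ⊆ U) {ι : Type*} {l : Filter ι} [l.IsCountablyGenerated] {u : ι → E → V}
    {g : E → V} (hu : ∀ᶠ i in l, ContinuousOn (u i) U) (hg : ContinuousOn g U)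
    (hlim : TendstoUniformlyOn u g l U) :
    Tendsto (fun i => ∫ y, K y (u i y) ∂μ) l (𝓝 (∫ y, K y (g y) ∂μ)) := by
  have hzero : ∀ y, y ∉ U → K y = 0 := fun y hy =>
    image_eq_zero_of_notMem_tsupport fun h => hy (hKU h)
  refine tendsto_integral_filter_of_dominated_convergence (fun y => ‖K y (g y)‖ + ‖K y‖)
    (hu.mono fun i hi =>
      (integrable_clm_apply_of_tsupport_subset hK hc hU hKU hi).aestronglyMeasurable) ?_
    ((integrable_clm_apply_of_tsupport_subset hK hc hU hKU hg).norm.add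
      (hK.integrable_of_hasCompactSupport hc).norm) (ae_of_all _ fun y => ?_)
  · filter_upwards [Metric.tendstoUniformlyOn_iff.1 hlim 1 one_pos] with i hi
    refine ae_of_all _ fun y => ?_
    by_cases hy : y ∈ U
    · calc ‖K y (u i y)‖ = ‖K y (g y) + K y (u i y - g y)‖ := by simp
        _ ≤ ‖K y (g y)‖ + ‖K y‖ * ‖u i y - g y‖ :=
          (norm_add_le _ _).trans (by gcongr; exact (K y).le_opNorm _)
        _ ≤ ‖K y (g y)‖ + ‖K y‖ := by
          rw [← dist_eq_norm, dist_comm]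
          gcongr
          exact mul_le_of_le_one_right (norm_nonneg _) (hi y hy).le
    · simp [hzero y hy]
  · by_cases hy : y ∈ U
    · exact ((K y).continuous.tendsto _).comp (hlim.tendsto_at hy)
    · simpa [hzero y hy] using tendsto_const_nhds

theorem integrable_smul_of_tsupport_subset [IsFiniteMeasureOnCompacts μ] {φ : E → ℝ}
    (hφ : Continuous φ) (hc : HasCompactSupport φ) (hU : IsOpen U) (hφU : tsupport φ ⊆ U)
    {g : E → V} (hg : ContinuousOn g U) : Integrable (fun y => φ y • g y) μ := by
  have hK : Continuous fun y => φ y • ContinuousLinearMap.id ℝ V := hφ.smul continuous_const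
  exact integrable_clm_apply_of_tsupport_subset hK hc.smul_right hU
    ((tsupport_smul_subset_left φ _).trans hφU) hg

theorem tendsto_integral_smul [IsFiniteMeasureOnCompacts μ] {φ : E → ℝ} (hφ : Continuous φ)
    (hc : HasCompactSupport φ)
    (hU : IsOpen U) (hφU : tsupport φ ⊆ U) {ι : Type*} {l : Filter ι} [l.IsCountablyGenerated]
    {u : ι → E → V} {g : E → V} (hu : ∀ᶠ i in l, ContinuousOn (u i) U) (hg : ContinuousOn g U)
    (hlim : TendstoUniformlyOn u g l U) :
    Tendsto (fun i => ∫ y, φ y • u i y ∂μ) l (𝓝 (∫ y, φ y • g y ∂μ)) := by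
  have hK : Continuous fun y => φ y • ContinuousLinearMap.id ℝ V := hφ.smul continuous_const
  exact tendsto_integral_clm_apply hK hc.smul_right hU
    ((tsupport_smul_subset_left φ _).trans hφU) hu hg hlim

variable [NormedSpace ℝ E]

theorem tendsto_integral_smulRight_fderiv [IsFiniteMeasureOnCompacts μ] {φ : E → ℝ}
    (hφ : ContDiff ℝ 1 φ) (hc : HasCompactSupport φ) (hU : IsOpen U) (hφU : tsupport φ ⊆ U)
    {ι : Type*} {l : Filter ι} [l.IsCountablyGenerated] {u : ι → E → V} {g : E → V}
    (Φ : (E →L[ℝ] V) →L[ℝ] W)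
    (hu : ∀ᶠ i in l, ContinuousOn (u i) U) (hg : ContinuousOn g U)
    (hlim : TendstoUniformlyOn u g l U) :
    Tendsto (fun i => ∫ y, Φ ((fderiv ℝ φ y).smulRight (u i y)) ∂μ) l
      (𝓝 (∫ y, Φ ((fderiv ℝ φ y).smulRight (g y)) ∂μ)) := by
  let K : (E →L[ℝ] ℝ) →L[ℝ] (V →L[ℝ] W) :=
    ContinuousLinearMap.compL ℝ V (E →L[ℝ] V) W Φ ∘L ContinuousLinearMap.smulRightL ℝ E V
  exact tendsto_integral_clm_apply (K := K ∘ fderiv ℝ φ)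
    (K.continuous.comp (hφ.continuous_fderiv one_ne_zero)) ((hc.fderiv ℝ).comp_left K.map_zero) hU
    ((tsupport_comp_subset K.map_zero _).trans ((tsupport_fderiv_subset ℝ).trans hφU)) hu hg hlim

variable [FiniteDimensional ℝ E] [μ.IsAddHaarMeasure] [CompleteSpace V] [CompleteSpace W]

theorem integral_smul_clm_fderiv (Φ : (E →L[ℝ] V) →L[ℝ] W) (hU : IsOpen U) {φ : E → ℝ}
    (hφ : ContDiff ℝ 1 φ) (hc : HasCompactSupport φ) (hφU : tsupport φ ⊆ U) {g : E → V}
    (hg : ContDiffOn ℝ 1 g U) :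
    ∫ y, φ y • Φ (fderiv ℝ g y) ∂μ = -∫ y, Φ ((fderiv ℝ φ y).smulRight (g y)) ∂μ := by
  have hφ' : Continuous (fderiv ℝ φ) := hφ.continuous_fderiv one_ne_zero
  have hint : Integrable (fun y => φ y • fderiv ℝ g y) μ :=
    integrable_smul_of_tsupport_subset hφ.continuous hc hU hφU
      (hg.continuousOn_fderiv_of_isOpen hU le_rfl)
  have hint₀ : Integrable (fun y => φ y • g y) μ :=
    integrable_smul_of_tsupport_subset hφ.continuous hc hU hφU hg.continuousOn
  have hint' : Integrable (fun y => (fderiv ℝ φ y).smulRight (g y)) μ :=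
    integrable_clm_apply_of_tsupport_subset
      (K := fun y => ContinuousLinearMap.smulRightL ℝ E V (fderiv ℝ φ y))
      ((ContinuousLinearMap.smulRightL ℝ E V).continuous.comp hφ')
      ((hc.fderiv ℝ).comp_left (map_zero _)) hU
      ((tsupport_comp_subset (map_zero _) _).trans ((tsupport_fderiv_subset ℝ).trans hφU))
      hg.continuousOn
  have hparts : ∫ y, φ y • fderiv ℝ g y ∂μ = -∫ y, (fderiv ℝ φ y).smulRight (g y) ∂μ := by
    ext w
    rw [neg_apply, ContinuousLinearMap.integral_apply hint,
      ContinuousLinearMap.integral_apply hint']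
    exact integral_smul_fderiv_eq_neg_fderiv_smul_of_integrable
      (hint'.apply_continuousLinearMap w) (hint.apply_continuousLinearMap w) hint₀
      (fun x _ => hφ.differentiable one_ne_zero x)
      fun x hx => (hg.contDiffAt (hU.mem_nhds (hφU hx))).differentiableAt one_ne_zero
  simp only [← map_smul]
  rw [Φ.integral_comp_comm hint, Φ.integral_comp_comm hint', hparts, map_neg]

end IntegrationByParts

section ClosedOperator

open MeasureTheory

variable {E V W : Type*} [NormedAddCommGroup E] [NormedSpace ℝ E] [FiniteDimensional ℝ E]
  [NormedAddCommGroup V] [NormedSpace ℝ V] [CompleteSpace V] [NormedAddCommGroup W]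
  [NormedSpace ℝ W] [CompleteSpace W] {U : Set E}

/-- Constant-coefficient first-order operators are closed under uniform limits, because they are so
in the sense of distributions. -/
theorem eqOn_clm_fderiv_of_tendstoUniformlyOn (Φ : (E →L[ℝ] V) →L[ℝ] W) (hU : IsOpen U) {ι : Type*}
    {l : Filter ι} [l.IsCountablyGenerated] [l.NeBot] {u : ι → E → V} {g : E → V} {h : E → W}
    (hu : ∀ᶠ i in l, ContDiffOn ℝ 1 (u i) U) (hg : ContDiffOn ℝ 1 g U) (hh : ContinuousOn h U)
    (hug : TendstoUniformlyOn u g l U)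
    (huh : TendstoUniformlyOn (fun i y => Φ (fderiv ℝ (u i) y)) h l U) :
    Set.EqOn (fun y => Φ (fderiv ℝ g y)) h U := by
  borelize E
  let μ : Measure E := Measure.addHaar
  have hcont : ∀ {g}, ContDiffOn ℝ 1 g U → ContinuousOn (fun y => Φ (fderiv ℝ g y)) U := fun hg =>
    Φ.continuous.comp_continuousOn (hg.continuousOn_fderiv_of_isOpen hU le_rfl)
  have hweak : ∀ φ : E → ℝ, ContDiff ℝ 1 φ → HasCompactSupport φ → tsupport φ ⊆ U →
      ∫ y, φ y • Φ (fderiv ℝ g y) ∂μ = ∫ y, φ y • h y ∂μ := fun φ hφ hc hφU => by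
    have hlim := tendsto_integral_smulRight_fderiv (μ := μ) hφ hc hU hφU Φ
      (hu.mono fun _ hi => hi.continuousOn) hg.continuousOn hug
    rw [integral_smul_clm_fderiv Φ hU hφ hc hφU hg]
    refine tendsto_nhds_unique (hlim.neg.congr' ?_) (tendsto_integral_smul hφ.continuous hc hU hφU
      (hu.mono fun _ hi => hcont hi) hh huh)
    filter_upwards [hu] with i hi using (integral_smul_clm_fderiv Φ hU hφ hc hφU hi).symm
  have hae : ∀ᵐ y ∂μ, y ∈ U → Φ (fderiv ℝ g y) - h y = 0 := by
    refine hU.ae_eq_zero_of_integral_contDiff_smul_eq_zero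
      (((hcont hg).sub hh).locallyIntegrableOn hU.measurableSet) fun φ hφ hc hφU => ?_
    have hφ₁ : ContDiff ℝ 1 φ := hφ.of_le (by exact_mod_cast le_top)
    simp only [smul_sub]
    rw [integral_sub (integrable_smul_of_tsupport_subset hφ.continuous hc hU hφU (hcont hg))
      (integrable_smul_of_tsupport_subset hφ.continuous hc hU hφU hh), hweak φ hφ₁ hc hφU, sub_self]
  refine Measure.eqOn_open_of_ae_eq (μ := μ) ?_ hU (hcont hg) hh
  filter_upwards [ae_restrict_of_ae hae, ae_restrict_mem hU.measurableSet] with y hy hyU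
    using sub_eq_zero.1 (hy hyU)

end ClosedOperator

section PowerSeriesParameter

variable {E V W : Type*} [NormedAddCommGroup V] [NormedSpace ℝ V] [CompleteSpace V]
  [NormedAddCommGroup W] [NormedSpace ℝ W] [CompleteSpace W] {U : Set E} {C R : ℝ}

theorem summable_pow_smul {b : ℕ → V} (hR : 0 ≤ R) (hb : ∀ k, ‖b k‖ ≤ C * R ^ k) {t : ℝ}
    (ht : |t| * R < 1) : Summable fun k => t ^ k • b k := by
  refine .of_norm_bounded ((summable_geometric_of_lt_one (by positivity) ht).mul_left C) fun k => ?_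
  calc ‖t ^ k • b k‖ = |t| ^ k * ‖b k‖ := by rw [norm_smul, norm_pow, Real.norm_eq_abs]
    _ ≤ |t| ^ k * (C * R ^ k) := by gcongr; exact hb k
    _ = C * (|t| * R) ^ k := by ring

theorem tsum_pow_smul_eq_add {b : ℕ → V} (hR : 0 ≤ R) (hb : ∀ k, ‖b k‖ ≤ C * R ^ k) {t : ℝ}
    (ht : |t| * R < 1) : ∑' k, t ^ k • b k = b 0 + t • ∑' k, t ^ k • b (k + 1) := by
  rw [(summable_pow_smul hR hb ht).tsum_eq_zero_add, ← tsum_const_smul'']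
  simp [smul_smul, pow_succ']

theorem eventually_abs_mul_lt_one (R : ℝ) : ∀ᶠ t : ℝ in 𝓝[>] 0, |t| * R < 1 := by
  have h : Tendsto (fun t : ℝ => |t| * R) (𝓝[>] 0) (𝓝 (|0| * R)) :=
    ((continuous_abs.mul continuous_const).tendsto 0).mono_left nhdsWithin_le_nhds
  rw [abs_zero, zero_mul] at h
  exact h.eventually_lt_const one_pos

theorem tendstoUniformlyOn_tsum_pow_smul {b : ℕ → E → V} (hR : 0 ≤ R)
    (hb : ∀ k, ∀ y ∈ U, ‖b k y‖ ≤ C * R ^ k) :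
    TendstoUniformlyOn (fun (t : ℝ) y => ∑' k, t ^ k • b k y) (b 0) (𝓝[>] 0) U := by
  have hlim : Tendsto (fun t : ℝ => |t| * (C * R * (1 - |t| * R)⁻¹)) (𝓝 0) (𝓝 0) := by
    have : ContinuousAt (fun t : ℝ => |t| * (C * R * (1 - |t| * R)⁻¹)) 0 := by
      fun_prop (disch := simp)
    simpa using this.tendsto
  refine Metric.tendstoUniformlyOn_iff.2 fun ε hε => ?_
  filter_upwards [eventually_abs_mul_lt_one R,
    (hlim.mono_left nhdsWithin_le_nhds).eventually_lt_const hε] with t ht hε y hy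
  refine lt_of_le_of_lt ?_ hε
  rw [tsum_pow_smul_eq_add hR (fun k => hb k y hy) ht, dist_self_add_right, norm_smul,
    Real.norm_eq_abs]
  gcongr
  refine tsum_of_norm_bounded
    ((hasSum_geometric_of_lt_one (by positivity) ht).mul_left (C * R)) fun k => ?_
  calc ‖t ^ k • b (k + 1) y‖ = |t| ^ k * ‖b (k + 1) y‖ := by
        rw [norm_smul, norm_pow, Real.norm_eq_abs]
    _ ≤ |t| ^ k * (C * R ^ (k + 1)) := by gcongr; exact hb (k + 1) y hy
    _ = C * R * (|t| * R) ^ k := by ring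

variable [NormedAddCommGroup E] [NormedSpace ℝ E] [FiniteDimensional ℝ E]

theorem clm_fderiv_zeroth_coeff_eq (Φ : (E →L[ℝ] V) →L[ℝ] W) (hU : IsOpen U) (hR : 0 ≤ R)
    {b : ℕ → E → V} {w : ℕ → E → W} (hb : ContDiffOn ℝ 1 (b 0) U) (hw : ContinuousOn (w 0) U)
    (hbC : ∀ k, ∀ y ∈ U, ‖b k y‖ ≤ C * R ^ k) (hwC : ∀ k, ∀ y ∈ U, ‖w k y‖ ≤ C * R ^ k)
    (hsum : ∀ᶠ t : ℝ in 𝓝[>] 0, ContDiffOn ℝ 1 (fun y => ∑' k, t ^ k • b k y) U)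
    (hΦ : ∀ᶠ t : ℝ in 𝓝[>] 0, ∀ y ∈ U,
      Φ (fderiv ℝ (fun y => ∑' k, t ^ k • b k y) y) = ∑' k, t ^ k • w k y) :
    ∀ y ∈ U, Φ (fderiv ℝ (b 0) y) = w 0 y := by
  refine eqOn_clm_fderiv_of_tendstoUniformlyOn Φ hU hsum hb hw
    (tendstoUniformlyOn_tsum_pow_smul hR hbC)
    ((tendstoUniformlyOn_tsum_pow_smul hR hwC).congr ?_)
  filter_upwards [hΦ] with t ht y hy using (ht y hy).symm

/-- Coefficients of a power series in an auxiliary parameter `t` can be compared without any bound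
on the derivatives of the `b k`: let `t → 0⁺`, subtract the constant term and divide by `t`. -/
theorem clm_fderiv_coeff_eq (Φ : (E →L[ℝ] V) →L[ℝ] W) (hU : IsOpen U) (hR : 0 ≤ R)
    {b : ℕ → E → V} {w : ℕ → E → W} (hb : ∀ k, ContDiffOn ℝ 1 (b k) U)
    (hw : ∀ k, ContinuousOn (w k) U) (hbC : ∀ k, ∀ y ∈ U, ‖b k y‖ ≤ C * R ^ k)
    (hwC : ∀ k, ∀ y ∈ U, ‖w k y‖ ≤ C * R ^ k)
    (hsum : ∀ᶠ t : ℝ in 𝓝[>] 0, ContDiffOn ℝ 1 (fun y => ∑' k, t ^ k • b k y) U)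
    (hΦ : ∀ᶠ t : ℝ in 𝓝[>] 0, ∀ y ∈ U,
      Φ (fderiv ℝ (fun y => ∑' k, t ^ k • b k y) y) = ∑' k, t ^ k • w k y) (k : ℕ) :
    ∀ y ∈ U, Φ (fderiv ℝ (b k) y) = w k y := by
  induction k generalizing b w C with
  | zero => exact clm_fderiv_zeroth_coeff_eq Φ hU hR (hb 0) (hw 0) hbC hwC hsum hΦ
  | succ _ ih =>
    have hzero := clm_fderiv_zeroth_coeff_eq Φ hU hR (hb 0) (hw 0) hbC hwC hsum hΦ
    have hshift : ∀ᶠ t : ℝ in 𝓝[>] 0, Set.EqOn (fun y => ∑' k, t ^ k • b (k + 1) y)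
        (fun y => t⁻¹ • ((∑' k, t ^ k • b k y) - b 0 y)) U := by
      filter_upwards [eventually_abs_mul_lt_one R, self_mem_nhdsWithin] with t ht ht₀ y hy
      simp only [tsum_pow_smul_eq_add hR (fun k => hbC k y hy) ht, add_sub_cancel_left,
        inv_smul_smul₀ (Set.mem_Ioi.1 ht₀).ne']
    refine ih (b := fun k => b (k + 1)) (w := fun k => w (k + 1)) (C := C * R) (fun k => hb (k + 1))
      (fun k => hw (k + 1)) (fun k y hy => (hbC (k + 1) y hy).trans_eq (by ring))
      (fun k y hy => (hwC (k + 1) y hy).trans_eq (by ring)) ?_ ?_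
    · filter_upwards [hsum, hshift] with t ht hts
      exact ((ht.sub (hb 0)).const_smul t⁻¹).congr hts
    · filter_upwards [hsum, hshift, hΦ, eventually_abs_mul_lt_one R, self_mem_nhdsWithin]
        with t ht hts hΦt htR ht₀ y hy
      have hdiff : ∀ {g : E → V}, ContDiffOn ℝ 1 g U → HasFDerivAt g (fderiv ℝ g y) y := fun hg =>
        ((hg.contDiffAt (hU.mem_nhds hy)).differentiableAt one_ne_zero).hasFDerivAt
      rw [(hts.eventuallyEq_of_mem (hU.mem_nhds hy)).fderiv_eq,
        (((hdiff ht).fun_sub (hdiff (hb 0))).fun_const_smul t⁻¹).fderiv, map_smul, map_sub,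
        hΦt y hy, hzero y hy, tsum_pow_smul_eq_add hR (fun k => hwC k y hy) htR,
        add_sub_cancel_left, inv_smul_smul₀ (Set.mem_Ioi.1 ht₀).ne']

end PowerSeriesParameter

section SliceRestriction

variable {V : Type*} [NormedAddCommGroup V] [NormedSpace ℝ V] {L : ℕ → V →L[ℝ] V} {m p : ℕ}

/-- `injP`, the inclusion `ℝ^{p+1} ⊆ ℝ^{m+1}`, as a continuous linear map. -/
noncomputable def injPL (m p : ℕ) : (Fin (p + 1) → ℝ) →L[ℝ] (Fin (m + 1) → ℝ) :=
  LinearMap.toContinuousLinearMap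
    { toFun := injP m p
      map_add' := fun x y => by funext s; by_cases h : (s : ℕ) < p + 1 <;> simp [injP, h]
      map_smul' := fun c x => by funext s; by_cases h : (s : ℕ) < p + 1 <;> simp [injP, h] }

theorem injPL_apply (y : Fin (p + 1) → ℝ) : injPL m p y = injP m p y := rfl

theorem projPL_injPL (hp : p ≤ m) (y : Fin (p + 1) → ℝ) : projPL m p (injPL m p y) = y :=
  projP_injP hp y

theorem vecQ_injPL (y : Fin (p + 1) → ℝ) : vecQ L m p (injPL m p y) = 0 := by
  rw [vecQ_apply]
  exact Finset.sum_eq_zero fun s hs => by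
    rw [injPL_apply, injP_of_lt y s (mem_qIndices.1 hs), zero_smul]

theorem dirac_eq_dirac_add_dirac (hp : p ≤ m) {F : (Fin (m + 1) → ℝ) → V}
    {x : Fin (m + 1) → ℝ} (hF : DifferentiableAt ℝ F x) :
    dirac L m F x = dirac L p (fun y => F (x + injPL m p (y - projPL m p x))) (projPL m p x) +
      dirac L m (fun z => F (z + injPL m p (projPL m p x - projPL m p z))) x := by
  have hslice : HasFDerivAt (fun y => F (x + injPL m p (y - projPL m p x)))
      ((fderiv ℝ F x).comp (injPL m p)) (projPL m p x) := by
    refine HasFDerivAt.comp _ (by simpa using hF.hasFDerivAt) ?_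
    simpa using ((injPL m p).hasFDerivAt.comp _
      ((hasFDerivAt_id (projPL m p x)).sub_const (projPL m p x))).const_add x
  have hfrozen : HasFDerivAt (fun z => F (z + injPL m p (projPL m p x - projPL m p z)))
      (fderiv ℝ F x - ((fderiv ℝ F x).comp (injPL m p)).comp (projPL m p)) x := by
    have hmap : HasFDerivAt (fun z => z + injPL m p (projPL m p x - projPL m p z))
        (.id ℝ _ + (injPL m p).comp (-projPL m p)) x :=
      (hasFDerivAt_id x).add ((injPL m p).hasFDerivAt.comp x
        ((projPL m p).hasFDerivAt.const_sub (projPL m p x)))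
    have hcomp := HasFDerivAt.comp (g := F) x (by simpa using hF.hasFDerivAt) hmap
    rwa [ContinuousLinearMap.comp_add, ContinuousLinearMap.comp_id, ContinuousLinearMap.comp_neg,
      ContinuousLinearMap.comp_neg, ← sub_eq_add_neg] at hcomp
  rw [dirac, dirac, dirac, hslice.fderiv, hfrozen.fderiv, map_sub, diracSymbol_comp_projPL hp]
  abel

variable [Nontrivial V] [CompleteSpace V]

/- Freezing the coefficients `B k` at `x_p` turns the sum into a series to which termwise
differentiation applies, and changes its Dirac derivative at `x` by the derivative in `x_p`. -/
theorem IsCliffordSystem.hasSum_dirac_slice (hL : IsCliffordSystem L m) (hp : p ≤ m)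
    {B : ℕ → (Fin (p + 1) → ℝ) → V} {x : Fin (m + 1) → ℝ} {C R : ℝ} (hR : 0 ≤ R)
    (hB : ∀ k, ‖B k (projPL m p x)‖ ≤ C * R ^ k) (hx : ‖vecQ L m p x‖ * R < 1)
    (hdiff : DifferentiableAt ℝ (fun x => ∑' k, (vecQ L m p x ^ k) (B k (projPL m p x))) x)
    (hdirac : dirac L m (fun x => ∑' k, (vecQ L m p x ^ k) (B k (projPL m p x))) x = 0) :
    HasSum (fun k => ckFactor (m - p) (k + 1) • (vecQ L m p x ^ k) (B (k + 1) (projPL m p x)))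
      (dirac L p (fun y => ∑' k, (vecQ L m p x ^ k) (B k y)) (projPL m p x)) := by
  obtain ⟨η, hη, hxη⟩ : ∃ η, η * R < 1 ∧ ‖vecQ L m p x‖ < η := by
    have hlim : ContinuousAt (fun η => η * R) ‖vecQ L m p x‖ := by fun_prop
    exact ((hlim.eventually_lt_const hx).filter_mono nhdsWithin_le_nhds |>.and
      (self_mem_nhdsWithin (s := Set.Ioi _))).exists
  have hconst : HasGeometricBound (fun k (_ : Fin (p + 1) → ℝ) => B k (projPL m p x))
      Set.univ (max C 0) R :=
    { contDiffAt := fun k y _ => contDiffAt_const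
      norm_le := fun k y _ => (hB k).trans (by gcongr; exact le_max_left _ _)
      norm_fderiv_le := fun k y _ => by simpa using by positivity }
  have hfrozen := hL.hasSum_dirac_tsum hp hconst hR hη isOpen_univ convex_univ (x := x)
    ⟨trivial, hxη⟩
  have hsplit := dirac_eq_dirac_add_dirac (L := L) hp hdiff
  simp only [map_add, map_sub, projPL_injPL hp, vecQ_injPL, add_zero, sub_zero,
    add_sub_cancel, hdirac] at hsplit
  rw [eq_neg_of_add_eq_zero_left hsplit.symm]
  refine hfrozen.neg.congr_fun fun k => ?_
  rw [dirac, hasFDerivAt_const _ _ |>.fderiv, map_zero, zero_sub, map_neg, neg_neg, map_smul]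

end SliceRestriction

section Baire

theorem exists_isOpen_forall_le_of_bddAbove {X ι : Type*} [TopologicalSpace X] [BaireSpace X]
    {W : Set X} (hW : IsOpen W) (hne : W.Nonempty) {f : ι → X → ℝ}
    (hf : ∀ i, ContinuousOn (f i) W) (hbdd : ∀ y ∈ W, BddAbove (Set.range fun i => f i y)) :
    ∃ U ⊆ W, IsOpen U ∧ U.Nonempty ∧ ∃ N, ∀ i, ∀ y ∈ U, f i y ≤ N := by
  have := hW.baireSpace
  have := hne.to_subtype
  have hclosed : ∀ N : ℕ, IsClosed {y : W | ∀ i, f i y ≤ N} := fun N => by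
    simp only [Set.ofPred_forall]
    exact isClosed_iInter fun i =>
      isClosed_le (continuousOn_iff_continuous_domRestrict.1 (hf i)) continuous_const
  have hcover : ⋃ N : ℕ, {y : W | ∀ i, f i y ≤ N} = Set.univ := by
    refine Set.eq_univ_of_forall fun y => Set.mem_iUnion.2 ?_
    obtain ⟨M, hM⟩ := hbdd y y.2
    obtain ⟨N, hN⟩ := exists_nat_ge M
    exact ⟨N, fun i => (hM ⟨i, rfl⟩).trans hN⟩
  obtain ⟨N, hN⟩ := nonempty_interior_of_iUnion_of_closed hclosed hcover
  refine ⟨(↑) '' interior {y : W | ∀ i, f i y ≤ N}, Subtype.coe_image_subset _ _,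
    hW.isOpenMap_subtype_val _ isOpen_interior, hN.image _, N, ?_⟩
  rintro i _ ⟨y, hy, rfl⟩
  exact interior_subset hy i

variable {X V : Type*} [TopologicalSpace X] [BaireSpace X] [NormedAddCommGroup V]
  [NormedSpace ℝ V]

theorem pow_apply_pow_apply {S T : V →L[ℝ] V} (h : S * T = 1) (k : ℕ) (b : V) :
    (S ^ k) ((T ^ k) b) = b := by
  rw [← mul_apply_eq_comp, pow_mul_pow_eq_one k h, one_apply_eq_self]

theorem exists_isOpen_norm_le_of_summable_pow_apply [Nontrivial V] {S T : V →L[ℝ] V}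
    (h : S * T = 1) {W : Set X} (hW : IsOpen W) (hne : W.Nonempty) {B : ℕ → X → V}
    (hB : ∀ k, ContinuousOn (B k) W) (hsum : ∀ y ∈ W, Summable fun k => (T ^ k) (B k y)) :
    ∃ U ⊆ W, IsOpen U ∧ U.Nonempty ∧ ∃ C, ∀ k, ∀ y ∈ U, ‖B k y‖ ≤ C * ‖S‖ ^ k := by
  obtain ⟨U, hUW, hU, hUne, C, hC⟩ := exists_isOpen_forall_le_of_bddAbove hW hne
    (f := fun k y => ‖(T ^ k) (B k y)‖)
    (fun k => ((T ^ k).continuous.comp_continuousOn (hB k)).norm)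
    fun y hy => (hsum y hy).tendsto_atTop_zero.norm.bddAbove_range
  refine ⟨U, hUW, hU, hUne, C, fun k y hy => ?_⟩
  have hnorm := norm_pow_apply_le (k := k) (C := C) (R := 1) (le_refl ‖S‖)
    ((hC k y hy).trans_eq (by rw [one_pow, mul_one]))
  rwa [pow_apply_pow_apply h, mul_one] at hnorm

end Baire

section Uniqueness

/-- The point `y + t v_m` of the slice `ℝ^{p+1} ⊕ v_m ℝ`. -/
noncomputable def slicePoint (m p : ℕ) (t : ℝ) (y : Fin (p + 1) → ℝ) : Fin (m + 1) → ℝ :=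
  injPL m p y + Pi.single (Fin.last m) t

variable {V : Type*} [NormedAddCommGroup V] [NormedSpace ℝ V] {L : ℕ → V →L[ℝ] V} {m p : ℕ}

theorem contDiff_slicePoint (t : ℝ) : ContDiff ℝ 1 (slicePoint m p t) :=
  (injPL m p).contDiff.add contDiff_const

theorem vecQ_slicePoint (hp : p < m) (t : ℝ) (y : Fin (p + 1) → ℝ) :
    vecQ L m p (slicePoint m p t y) = t • L m := by
  rw [slicePoint, map_add, vecQ_injPL, zero_add, vecQ_single, Fin.val_last, if_pos hp]

theorem projPL_slicePoint (hp : p < m) (t : ℝ) (y : Fin (p + 1) → ℝ) :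
    projPL m p (slicePoint m p t y) = y := by
  rw [slicePoint, map_add, projPL_injPL hp.le, projPL_single_of_lt (by simpa using hp), add_zero]

theorem exists_forall_slicePoint_mem {Ω : Set (Fin (m + 1) → ℝ)} {y₀ : Fin (p + 1) → ℝ}
    (hΩ : Ω ∈ 𝓝 (injP m p y₀)) :
    ∃ ρ > 0, ∀ t, |t| ≤ ρ → ∀ y ∈ Metric.ball y₀ ρ, slicePoint m p t y ∈ Ω := by
  have hcont : Continuous fun z : ℝ × (Fin (p + 1) → ℝ) => slicePoint m p z.1 z.2 :=
    ((injPL m p).continuous.comp continuous_snd).add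
      ((continuous_single (Fin.last m)).comp continuous_fst)
  have hnhds : (fun z : ℝ × (Fin (p + 1) → ℝ) => slicePoint m p z.1 z.2) ⁻¹' Ω ∈ 𝓝 (0, y₀) :=
    hcont.continuousAt (by simpa [slicePoint, injPL_apply] using hΩ)
  obtain ⟨ρ, hρ, hball⟩ := Metric.nhds_basis_closedBall.mem_iff.1 hnhds
  refine ⟨ρ, hρ, fun t ht y hy => hball (a := (t, y)) ?_⟩
  rw [← closedBall_prod_same]
  exact ⟨by simpa using ht, Metric.ball_subset_closedBall hy⟩

theorem vecQ_slicePoint_pow_apply (hp : p < m) (t : ℝ) (y : Fin (p + 1) → ℝ) (k : ℕ) (b : V) :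
    (vecQ L m p (slicePoint m p t y) ^ k) b = t ^ k • (L m ^ k) b := by
  rw [vecQ_slicePoint hp, smul_pow, smul_apply]

variable {B : ℕ → (Fin (p + 1) → ℝ) → V} {Ω : Set (Fin (m + 1) → ℝ)}

theorem HasMonogenicSum.contDiffOn_slice (hB : HasMonogenicSum L m p B Ω) (hp : p < m) {t : ℝ}
    {U : Set (Fin (p + 1) → ℝ)} (hU : ∀ y ∈ U, slicePoint m p t y ∈ Ω) :
    ContDiffOn ℝ 1 (fun y => ∑' k, t ^ k • (L m ^ k) (B k y)) U := by
  refine (hB.contDiffOn.comp (contDiff_slicePoint t).contDiffOn hU).congr fun y _ => ?_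
  simp only [Function.comp_apply, vecQ_slicePoint_pow_apply hp, projPL_slicePoint hp]

variable [Nontrivial V]

theorem norm_ckFactor_smul_pow_apply_le {q k : ℕ} (hq : 1 ≤ q) {T : V →L[ℝ] V} {b : V} {C R : ℝ}
    (hb : ‖b‖ ≤ C * R ^ (k + 1)) :
    ‖ckFactor q (k + 1) • (T ^ k) b‖ ≤ (q + 1) * (C * R) * (2 * (‖T‖ * R)) ^ k := by
  have hfactor : 0 ≤ ckFactor q (k + 1) := (le_ckFactor hq _).trans' (Nat.cast_nonneg _)
  rw [norm_smul, Real.norm_of_nonneg hfactor]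
  calc ckFactor q (k + 1) * ‖(T ^ k) b‖ ≤ (q + 1) * 2 ^ k * (C * R * (‖T‖ * R) ^ k) := by
        gcongr
        · exact ckFactor_succ_le q k
        · exact norm_pow_apply_le le_rfl (hb.trans_eq (by ring))
    _ = (q + 1) * (C * R) * (2 * (‖T‖ * R)) ^ k := by ring

variable [CompleteSpace V]

theorem HasMonogenicSum.dirac_slice_eq (hB : HasMonogenicSum L m p B Ω)
    (hL : IsCliffordSystem L m) (hp : p < m) (hΩ : IsOpen Ω) {C R t : ℝ} (hR : 0 ≤ R)
    {y : Fin (p + 1) → ℝ} (hy : slicePoint m p t y ∈ Ω) (hbound : ∀ k, ‖B k y‖ ≤ C * R ^ k)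
    (ht : |t| * (‖L m‖ * R) < 1) :
    dirac L p (fun y => ∑' k, t ^ k • (L m ^ k) (B k y)) y =
      ∑' k, t ^ k • ckFactor (m - p) (k + 1) • (L m ^ k) (B (k + 1) y) := by
  have hslice := hL.hasSum_dirac_slice hp.le (x := slicePoint m p t y) (B := B) hR
    (by rwa [projPL_slicePoint hp])
    (by rwa [vecQ_slicePoint hp, norm_smul, Real.norm_eq_abs, mul_assoc])
    ((hB.contDiffOn.contDiffAt (hΩ.mem_nhds hy)).differentiableAt one_ne_zero)
    (hB.dirac_eq_zero _ hy)
  simpa only [projPL_slicePoint hp, vecQ_slicePoint_pow_apply hp, smul_comm (ckFactor _ _)]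
    using hslice.tsum_eq.symm

theorem HasMonogenicSum.diracSymbol_fderiv_pow_apply_eq (hB : HasMonogenicSum L m p B Ω)
    (hL : IsCliffordSystem L m) (hp : p < m) (hΩ : IsOpen Ω) {U : Set (Fin (p + 1) → ℝ)}
    (hU : IsOpen U) (hBU : ∀ k, ContDiffOn ℝ 1 (B k) U) {ρ C R : ℝ} (hρ : 0 < ρ) (hR : 0 ≤ R)
    (hmem : ∀ t, |t| ≤ ρ → ∀ y ∈ U, slicePoint m p t y ∈ Ω)
    (hbound : ∀ k, ∀ y ∈ U, ‖B k y‖ ≤ C * R ^ k) (k : ℕ) :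
    ∀ y ∈ U, diracSymbol L p (fderiv ℝ (fun y => (L m ^ k) (B k y)) y) =
      ckFactor (m - p) (k + 1) • (L m ^ k) (B (k + 1) y) := by
  have hsmall : ∀ᶠ t : ℝ in 𝓝[>] 0, |t| ≤ ρ := by
    filter_upwards [Ioc_mem_nhdsGT hρ] with t ht
    rw [abs_of_pos ht.1]
    exact ht.2
  refine clm_fderiv_coeff_eq (C := max C ((((m - p : ℕ) : ℝ) + 1) * (C * R)))
    (R := 2 * (‖L m‖ * R)) (diracSymbol L p) hU (by positivity)
    (b := fun k y => (L m ^ k) (B k y))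
    (w := fun k y => ckFactor (m - p) (k + 1) • (L m ^ k) (B (k + 1) y))
    (fun k => (L m ^ k).contDiff.comp_contDiffOn (hBU k))
    (fun k => ((L m ^ k).continuous.comp_continuousOn (hBU (k + 1)).continuousOn).const_smul _)
    (fun k y hy => ?_) (fun k y hy => ?_) ?_ ?_ k
  · have hC : 0 ≤ C := by simpa using (norm_nonneg _).trans (hbound 0 y hy)
    refine (norm_pow_apply_le le_rfl (hbound k y hy)).trans ?_
    gcongr ?_ * ?_ ^ k
    · exact le_max_left _ _
    · exact le_mul_of_one_le_left (by positivity) one_le_two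
  · refine (norm_ckFactor_smul_pow_apply_le (Nat.sub_pos_of_lt hp)
      (hbound (k + 1) y hy)).trans ?_
    gcongr
    exact le_max_right _ _
  · filter_upwards [hsmall] with t ht using hB.contDiffOn_slice hp (hmem t ht)
  · filter_upwards [hsmall, eventually_abs_mul_lt_one (‖L m‖ * R)] with t ht htR y hy
    exact hB.dirac_slice_eq hL hp hΩ hR (hmem t ht y hy) (fun k => hbound k y hy) htR

/- By Baire, convergence at a single `t ≠ 0` bounds the coefficients geometrically on some open
set, and there the coefficients of `t ^ k` can be compared. -/
theorem HasMonogenicSum.exists_dirac_eq (hB : HasMonogenicSum L m p B Ω)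
    (hL : IsCliffordSystem L m) (hp : p < m) (hΩ : IsOpen Ω) {W : Set (Fin (p + 1) → ℝ)}
    (hW : IsOpen W) (hne : W.Nonempty) (hinj : injP m p '' W ⊆ Ω)
    (hBW : ∀ k, ContDiffOn ℝ 1 (B k) W) :
    ∃ y ∈ W, ∀ k, dirac (twist L k) p (B k) y = ckFactor (m - p) (k + 1) • B (k + 1) y := by
  obtain ⟨y₀, hy₀⟩ := hne
  obtain ⟨ρ, hρ, hmem⟩ := exists_forall_slicePoint_mem (hΩ.mem_nhds (hinj ⟨y₀, hy₀, rfl⟩))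
  have hsq : L m * L m = -1 := hL.mul_self m (by omega) le_rfl
  have hinv : (-ρ⁻¹ • L m) * (ρ • L m) = 1 := by
    rw [smul_mul_smul_comm, hsq, neg_mul, inv_mul_cancel₀ hρ.ne', neg_smul, one_smul, neg_neg]
  obtain ⟨U, hUW, hU, ⟨y, hy⟩, C, hC⟩ := exists_isOpen_norm_le_of_summable_pow_apply hinv
    (hW.inter Metric.isOpen_ball) ⟨y₀, hy₀, Metric.mem_ball_self hρ⟩
    (fun k => (hBW k).continuousOn.mono Set.inter_subset_left) fun z hz => by
      simpa only [vecQ_slicePoint hp, projPL_slicePoint hp] using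
        hB.summable _ (hmem ρ (abs_of_pos hρ).le z hz.2)
  have hBU : ∀ k, ContDiffOn ℝ 1 (B k) U := fun k =>
    (hBW k).mono (hUW.trans Set.inter_subset_left)
  refine ⟨y, (hUW hy).1, fun k => ?_⟩
  have hcoeff := hB.diracSymbol_fderiv_pow_apply_eq hL hp hΩ hU hBU hρ (norm_nonneg _)
    (fun t ht z hz => hmem t ht z (hUW hz).2) hC k y hy
  have hdiff : HasFDerivAt (B k) (fderiv ℝ (B k) y) y :=
    (((hBU k).contDiffAt (hU.mem_nhds hy)).differentiableAt one_ne_zero).hasFDerivAt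
  have hvec : vecQ L m p (slicePoint m p 1 y) = L m := by rw [vecQ_slicePoint hp, one_smul]
  have hcomm := hL.diracSymbol_vecQ_pow_comp (slicePoint m p 1 y) k (fderiv ℝ (B k) y)
  have hcomp : HasFDerivAt (fun y => (L m ^ k) (B k y)) ((L m ^ k).comp (fderiv ℝ (B k) y)) y :=
    (L m ^ k).hasFDerivAt.comp y hdiff
  rw [hcomp.fderiv, ← hvec, hcomm, hvec, ← map_smul] at hcoeff
  have hcancel : -L m * L m = 1 := by rw [neg_mul, hsq, neg_neg]
  exact (Function.LeftInverse.injective (pow_apply_pow_apply hcancel k)) hcoeff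

theorem HasMonogenicSum.dirac_eq (hB : HasMonogenicSum L m p B Ω)
    (hL : IsCliffordSystem L m) (hp : p < m) (hΩ : IsOpen Ω) {Ω₀ : Set (Fin (p + 1) → ℝ)}
    (hΩ₀ : IsOpen Ω₀) (hinj : injP m p '' Ω₀ ⊆ Ω) (hBΩ₀ : ∀ k, ContDiffOn ℝ 1 (B k) Ω₀)
    (k : ℕ) : ∀ y ∈ Ω₀,
      dirac (twist L k) p (B k) y = ckFactor (m - p) (k + 1) • B (k + 1) y := by
  intro y hy
  by_contra hne
  have hcont : ContinuousOn (fun y => dirac (twist L k) p (B k) y -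
      ckFactor (m - p) (k + 1) • B (k + 1) y) Ω₀ :=
    ((diracSymbol (twist L k) p).continuous.comp_continuousOn
      ((hBΩ₀ k).continuousOn_fderiv_of_isOpen hΩ₀ le_rfl)).sub
      ((hBΩ₀ (k + 1)).continuousOn.const_smul _)
  obtain ⟨z, hz, hzeq⟩ := hB.exists_dirac_eq hL hp hΩ
    (hcont.isOpen_inter_preimage hΩ₀ isOpen_compl_singleton) ⟨y, hy, sub_ne_zero.2 hne⟩
    ((Set.image_mono Set.inter_subset_left).trans hinj)
    fun k => (hBΩ₀ k).mono Set.inter_subset_left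
  exact hz.2 (sub_eq_zero.2 (hzeq k))

theorem HasMonogenicSum.eqOn_ckCoeff (hB : HasMonogenicSum L m p B Ω)
    (hL : IsCliffordSystem L m) (hp : p < m) (hΩ : IsOpen Ω) {Ω₀ : Set (Fin (p + 1) → ℝ)}
    (hΩ₀ : IsOpen Ω₀) (hinj : injP m p '' Ω₀ ⊆ Ω) (hBΩ₀ : ∀ k, ContDiffOn ℝ 1 (B k) Ω₀)
    (k : ℕ) : Set.EqOn (B k) (ckCoeff L p (m - p) (B 0) k) Ω₀ := by
  induction k with
  | zero => exact fun y _ => rfl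
  | succ k ih =>
    intro y hy
    have hdirac := hB.dirac_eq hL hp hΩ hΩ₀ hinj hBΩ₀ k y hy
    rw [dirac, (ih.eventuallyEq_of_mem (hΩ₀.mem_nhds hy)).fderiv_eq, ← dirac] at hdirac
    simp only [ckCoeff, hdirac, inv_smul_smul₀ (ckFactor_succ_ne_zero (Nat.sub_pos_of_lt hp) k)]

end Uniqueness

section LeftAlternative

variable (A)

/-- `A` is a unital real algebra, not necessarily associative, which satisfies the left alternative
law and whose left multiplications are continuous. In this setting the left multiplications by a
Clifford system of `A` form a Clifford system of operators. -/
structure IsLeftAltAlg : Prop where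
  mul_add' : ∀ a b c : A, a * (b + c) = a * b + a * c
  add_mul' : ∀ a b c : A, (a + b) * c = a * c + b * c
  smul_mul' : ∀ (r : ℝ) (a b : A), (r • a) * b = r • (a * b)
  mul_smul' : ∀ (r : ℝ) (a b : A), a * (r • b) = r • (a * b)
  one_mul' : ∀ a : A, 1 * a = a
  mul_one' : ∀ a : A, a * 1 = a
  alt_left : ∀ a b : A, a * (a * b) = a * a * b
  continuous_mul_left : ∀ a : A, Continuous fun b => a * b

variable {A}

theorem IsAltStarAlg.isLeftAltAlg {conj : A → A} (H : IsAltStarAlg A conj) : IsLeftAltAlg A where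
  mul_add' := H.mul_add'
  add_mul' := H.add_mul'
  smul_mul' := H.smul_mul'
  mul_smul' := H.mul_smul'
  one_mul' := H.one_mul'
  mul_one' := H.mul_one'
  alt_left := H.alt_left
  continuous_mul_left a :=
    have := H.finDim
    LinearMap.continuous_of_finiteDimensional (IsLinearMap.mk' (fun b => a * b)
      ⟨H.mul_add' a, fun r => H.mul_smul' r a⟩)

namespace IsLeftAltAlg

/-- Left multiplication, as a linear map from the algebra into its continuous endomorphisms. It
turns the nonassociative products of the statement into products of operators. -/
noncomputable def mulLeft (H : IsLeftAltAlg A) : A →ₗ[ℝ] A →L[ℝ] A where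
  toFun a := ⟨IsLinearMap.mk' (fun b => a * b) ⟨H.mul_add' a, fun r => H.mul_smul' r a⟩,
    H.continuous_mul_left a⟩
  map_add' a b := by ext c; exact H.add_mul' a b c
  map_smul' r a := by ext b; exact H.smul_mul' r a b

variable (H : IsLeftAltAlg A)

theorem mulLeft_apply (a b : A) : H.mulLeft a b = a * b := rfl

theorem mulLeft_one : H.mulLeft 1 = 1 := by
  ext a
  exact H.one_mul' a

theorem mulLeft_mul_self (a : A) : H.mulLeft a * H.mulLeft a = H.mulLeft (a * a) := by
  ext b
  exact H.alt_left a b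

theorem mulLeft_mul_mulLeft_add (a b : A) :
    H.mulLeft a * H.mulLeft b + H.mulLeft b * H.mulLeft a = H.mulLeft (a * b + b * a) := by
  have hexpand : (a + b) * (a + b) = a * a + (a * b + b * a) + b * b := by
    rw [H.add_mul', H.mul_add', H.mul_add']
    abel
  have hsq := H.mulLeft_mul_self (a + b)
  rw [hexpand, map_add, map_add, map_add, ← mulLeft_mul_self, ← mulLeft_mul_self, add_mul,
    mul_add, mul_add] at hsq
  rw [← sub_eq_zero] at hsq ⊢
  rw [← hsq]
  abel

theorem isCliffordSystem_mulLeft {v : ℕ → A} {m : ℕ} (hv : IsCliffordSystem v m) :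
    IsCliffordSystem (fun s => H.mulLeft (v s)) m where
  zero := by rw [hv.zero, H.mulLeft_one]
  mul_self s hs₀ hs := by rw [H.mulLeft_mul_self, hv.mul_self s hs₀ hs, map_neg, H.mulLeft_one]
  anticomm s t hs₀ hs ht₀ ht hst := by
    rw [← add_eq_zero_iff_eq_neg, H.mulLeft_mul_mulLeft_add,
      hv.anticomm s t hs₀ hs ht₀ ht hst, neg_add_cancel, map_zero]

theorem apow_mul {a : A} {c : ℝ} (ha : H.mulLeft a * H.mulLeft a = c • 1) (k : ℕ) (b : A) :
    apow a k * b = (H.mulLeft a ^ k) b := by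
  induction k using Nat.twoStepInduction with
  | zero => simpa [apow] using H.one_mul' b
  | one => simp [apow, H.mul_one', H.mulLeft_apply]
  | more k ih _ =>
    have hpow : apow a (k + 2) = c • apow a k := by
      calc apow a (k + 2) = (H.mulLeft a * H.mulLeft a) (apow a k) := by
            simp only [apow, Function.iterate_succ_apply']
            rfl
        _ = c • apow a k := by rw [ha]; rfl
    rw [hpow, H.smul_mul', ih, pow_add, sq, ha, mul_smul_comm, mul_one]
    rfl

variable {v : ℕ → A} {m p : ℕ}

theorem mulLeft_emb_xqpart (x : Fin (m + 1) → ℝ) :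
    H.mulLeft (emb v m (xqpart m p x)) = vecQ (fun s => H.mulLeft (v s)) m p x := by
  simp only [emb, map_sum, map_smul, vecQ_apply, qIndices, Finset.sum_filter]
  refine Finset.sum_congr rfl fun s _ => ?_
  by_cases hs : (s : ℕ) ≤ p <;> simp [xqpart, hs, not_lt.2, not_le.1]

theorem rad_eq_one_of_mem_Sph (H : IsLeftAltAlg A) [Nontrivial A] (hv : IsCliffordSystem v m)
    {w : Fin (m + 1) → ℝ} (hw : w ∈ Sph v m p) : rad m p w = 1 := by
  have hxq : xqpart m p w = w := by
    funext s
    by_cases hs : (s : ℕ) ≤ p <;> simp [xqpart, hs, hw.1]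
  have hsq : -normSqQ m p w • (1 : A →L[ℝ] A) = (-1 : ℝ) • 1 := by
    rw [← (H.isCliffordSystem_mulLeft hv).vecQ_mul_self, ← H.mulLeft_emb_xqpart, hxq,
      H.mulLeft_mul_self, hw.2, map_neg, H.mulLeft_one, neg_one_smul]
  have hnorm := neg_injective (smul_left_injective ℝ one_ne_zero hsq)
  rw [rad_eq_sqrt_normSqQ, hnorm, Real.sqrt_one]

theorem DopP_eq_dirac : DopP v p = dirac (fun s => H.mulLeft (v s)) p := by
  funext g y
  simp only [DopP, pdP, dirac, diracSymbol_apply, mulLeft_apply]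

theorem Dop_eq_dirac : Dop v m 0 m = dirac (fun s => H.mulLeft (v s)) m := by
  funext g y
  simp only [Dop, pdF, dirac, diracSymbol_apply, mulLeft_apply]
  exact Finset.sum_congr rfl fun s _ => if_pos ⟨s.val.zero_le, s.is_le⟩

theorem hasMonogenicSum_mulLeft_iff (hv : IsCliffordSystem v m)
    {B : ℕ → (Fin (p + 1) → ℝ) → A} {Ω : Set (Fin (m + 1) → ℝ)} :
    HasMonogenicSum (fun s => H.mulLeft (v s)) m p B Ω ↔
      (∀ x ∈ Ω, Summable fun k =>
        apow (emb v m (xqpart m p x)) k * B k (projP m p x)) ∧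
      Monogenic v m (fun x => ∑' k,
        apow (emb v m (xqpart m p x)) k * B k (projP m p x)) Ω := by
  have hterm : ∀ (x : Fin (m + 1) → ℝ) k, apow (emb v m (xqpart m p x)) k * B k (projP m p x) =
      (vecQ (fun s => H.mulLeft (v s)) m p x ^ k) (B k (projPL m p x)) := fun x k => by
    rw [H.apow_mul (c := -normSqQ m p x), H.mulLeft_emb_xqpart, projPL_apply]
    rw [H.mulLeft_emb_xqpart, (H.isCliffordSystem_mulLeft hv).vecQ_mul_self]
  simp only [hterm, Monogenic, H.Dop_eq_dirac]
  exact ⟨fun h => ⟨h.summable, h.contDiffOn, h.dirac_eq_zero⟩, fun h => ⟨h.1, h.2.1, h.2.2⟩⟩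

end IsLeftAltAlg

theorem IsHypBasis.isCliffordSystem {conj : A → A} (H : IsAltStarAlg A conj) {v : ℕ → A} {m : ℕ}
    (hv : IsHypBasis A conj v m) : IsCliffordSystem v m where
  zero := hv.v_zero
  mul_self s hs₀ hs := by
    have hconj : conj (v s) = (-1 : ℝ) • v s := by
      rw [neg_one_smul, eq_neg_iff_add_eq_zero, add_comm, hv.trace_zero s hs₀ hs]
    rw [← hv.norm_one s hs₀ hs, hconj, H.mul_smul', neg_one_smul, neg_neg]
  anticomm := hv.anticomm

end LeftAlternative

theorem generalized_CK_extension_general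
    {A : Type*} [NormedAddCommGroup A] [NormedSpace ℝ A] [Mul A] [One A] [Nontrivial A]
    [CompleteSpace A] (H : IsLeftAltAlg A)
    (v : ℕ → A) (m p : ℕ) (hv : IsCliffordSystem v m) (hp : p < m)
    (Ω₀ : Set (Fin (p + 1) → ℝ)) (hΩ₀ : IsOpen Ω₀) (hΩ₀conn : IsConnected Ω₀)
    (A₀ : (Fin (p + 1) → ℝ) → A) (hA₀ : AnalyticOnNhd ℝ A₀ Ω₀) :
    ∃ Aseq : ℕ → (Fin (p + 1) → ℝ) → A,
      Aseq 0 = A₀ ∧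
      (∀ k, AnalyticOnNhd ℝ (Aseq k) Ω₀) ∧
      (∃ Ω : Set (Fin (m + 1) → ℝ),
        PSym v m p Ω ∧ SliceDomain v m p Ω ∧
        injP m p '' Ω₀ ⊆ Ω ∧ Ω ⊆ Omega0star m p Ω₀ ∧
        (∀ x ∈ Ω, Summable (fun k : ℕ =>
          apow (emb v m (xqpart m p x)) k * Aseq k (projP m p x))) ∧
        Monogenic v m (fun x => ∑' k : ℕ,
          apow (emb v m (xqpart m p x)) k * Aseq k (projP m p x)) Ω) ∧
      (∀ k : ℕ, ∀ y ∈ Ω₀,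
        Aseq (2 * k) y =
          (Real.Gamma (((m - p : ℕ) : ℝ) / 2) /
              (2 ^ (2 * k) * (k.factorial : ℝ) *
                Real.Gamma ((k : ℝ) + ((m - p : ℕ) : ℝ) / 2))) •
            lapIterP p k A₀ y ∧
        Aseq (2 * k + 1) y =
          (Real.Gamma (((m - p : ℕ) : ℝ) / 2) /
              (2 ^ (2 * k + 1) * (k.factorial : ℝ) *
                Real.Gamma ((k : ℝ) + ((m - p : ℕ) : ℝ) / 2 + 1))) •
            lapIterP p k (DopP v p A₀) y) ∧
      (∀ Bseq : ℕ → (Fin (p + 1) → ℝ) → A,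
        Bseq 0 = A₀ →
        (∀ k, ContDiffOn ℝ 1 (Bseq k) Ω₀) →
        (∃ Ω' : Set (Fin (m + 1) → ℝ),
          IsOpen Ω' ∧ injP m p '' Ω₀ ⊆ Ω' ∧
          (∀ x ∈ Ω', Summable (fun k : ℕ =>
            apow (emb v m (xqpart m p x)) k * Bseq k (projP m p x))) ∧
          Monogenic v m (fun x => ∑' k : ℕ,
            apow (emb v m (xqpart m p x)) k * Bseq k (projP m p x)) Ω') →
        ∀ k, Set.EqOn (Bseq k) (Aseq k) Ω₀) := by
  have hL := H.isCliffordSystem_mulLeft hv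
  have hrad : ∀ w ∈ Sph v m p, rad m p w = 1 := fun w hw => H.rad_eq_one_of_mem_Sph hv hw
  have hmem := fun x hx x' hproj => mem_ckDomain_of_rad_le (L := fun s => H.mulLeft (v s))
    (m := m) (Ω₀ := Ω₀) (f := A₀) (x := x) (x' := x') hx hproj
  have hinj := injP_image_subset_ckDomain (L := fun s => H.mulLeft (v s)) hp hΩ₀ hA₀
  refine ⟨ckCoeff (fun s => H.mulLeft (v s)) p (m - p) A₀, rfl,
    fun k y hy => analyticAt_ckCoeff (hA₀ y hy) k,
    ⟨ckDomain (fun s => H.mulLeft (v s)) m p Ω₀ A₀, pSym_of_forall_rad_le hrad hmem,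
      sliceDomain_of_forall_rad_le hrad hmem hp.le hΩ₀conn isOpen_ckDomain hinj ckDomain_subset,
      hinj, ckDomain_subset,
      (H.hasMonogenicSum_mulLeft_iff hv).1 (hL.hasMonogenicSum_ckCoeff hp)⟩,
    fun k y hy => ⟨?_, ?_⟩, ?_⟩
  · exact hL.ckCoeff_two_mul hp.le (Nat.sub_pos_of_lt hp) hΩ₀ hA₀ k hy
  · rw [H.DopP_eq_dirac]
    exact hL.ckCoeff_two_mul_add_one hp.le (Nat.sub_pos_of_lt hp) hΩ₀ hA₀ k hy
  · rintro B rfl hB ⟨Ω', hΩ', hinjΩ', hsum⟩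
    exact ((H.hasMonogenicSum_mulLeft_iff hv).2 hsum).eqOn_ckCoeff hL hp hΩ' hΩ₀ hinjΩ' hB

/-- **Generalized CK-extension (monogenic).** Given a real analytic `A₀` on a domain
`Ω₀ ⊆ ℝ^{p+1}`, there is a unique sequence of real analytic functions `A_k` (`k ≥ 1`)
on `Ω₀` such that `Σ_k x_q^k A_k(x_p)` converges on a p-symmetric slice domain
`Ω₀ ⊂ Ω ⊆ Ω₀*` to a left monogenic function; the coefficients are necessarily
`A_{2k} = (Γ(q/2)/(2^{2k} k! Γ(k+q/2))) Δ_{x_p}^k A₀` and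
`A_{2k+1} = (Γ(q/2)/(2^{2k+1} k! Γ(k+q/2+1))) Δ_{x_p}^k (D_{x_p} A₀)`. -/
theorem generalized_CK_extension
    {A : Type*} [NormedAddCommGroup A] [NormedSpace ℝ A] [Mul A] [One A]
    (conj : A → A) (H : IsAltStarAlg A conj)
    (v : ℕ → A) (m p : ℕ) (hv : IsHypBasis A conj v m) (hp : p < m)
    (Ω₀ : Set (Fin (p + 1) → ℝ)) (hΩ₀ : IsOpen Ω₀) (hΩ₀conn : IsConnected Ω₀)
    (A₀ : (Fin (p + 1) → ℝ) → A) (hA₀ : AnalyticOnNhd ℝ A₀ Ω₀) :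
    ∃ Aseq : ℕ → (Fin (p + 1) → ℝ) → A,
      -- existence:
      Aseq 0 = A₀ ∧
      (∀ k, AnalyticOnNhd ℝ (Aseq k) Ω₀) ∧
      (∃ Ω : Set (Fin (m + 1) → ℝ),
        PSym v m p Ω ∧ SliceDomain v m p Ω ∧
        injP m p '' Ω₀ ⊆ Ω ∧ Ω ⊆ Omega0star m p Ω₀ ∧
        (∀ x ∈ Ω, Summable (fun k : ℕ =>
          apow (emb v m (xqpart m p x)) k * Aseq k (projP m p x))) ∧
        Monogenic v m (fun x => ∑' k : ℕ,
          apow (emb v m (xqpart m p x)) k * Aseq k (projP m p x)) Ω) ∧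
      -- the coefficients are given by the stated formulas:
      (∀ k : ℕ, ∀ y ∈ Ω₀,
        Aseq (2 * k) y =
          (Real.Gamma (((m - p : ℕ) : ℝ) / 2) /
              (2 ^ (2 * k) * (k.factorial : ℝ) *
                Real.Gamma ((k : ℝ) + ((m - p : ℕ) : ℝ) / 2))) •
            lapIterP p k A₀ y ∧
        Aseq (2 * k + 1) y =
          (Real.Gamma (((m - p : ℕ) : ℝ) / 2) /
              (2 ^ (2 * k + 1) * (k.factorial : ℝ) *
                Real.Gamma ((k : ℝ) + ((m - p : ℕ) : ℝ) / 2 + 1))) •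
            lapIterP p k (DopP v p A₀) y) ∧
      -- uniqueness: any sequence with these properties agrees with `Aseq` on `Ω₀`:
      (∀ Bseq : ℕ → (Fin (p + 1) → ℝ) → A,
        Bseq 0 = A₀ →
        (∀ k, AnalyticOnNhd ℝ (Bseq k) Ω₀) →
        (∃ Ω' : Set (Fin (m + 1) → ℝ),
          PSym v m p Ω' ∧ SliceDomain v m p Ω' ∧
          injP m p '' Ω₀ ⊆ Ω' ∧ Ω' ⊆ Omega0star m p Ω₀ ∧
          (∀ x ∈ Ω', Summable (fun k : ℕ =>
            apow (emb v m (xqpart m p x)) k * Bseq k (projP m p x))) ∧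
          Monogenic v m (fun x => ∑' k : ℕ,
            apow (emb v m (xqpart m p x)) k * Bseq k (projP m p x)) Ω') →
        ∀ k, Set.EqOn (Bseq k) (Aseq k) Ω₀) := by
  have := H.finDim
  have := Module.nontrivial_of_finrank_pos (zero_lt_one.trans H.one_lt_finrank)
  have := FiniteDimensional.complete ℝ A
  obtain ⟨Aseq, h₀, han, hex, hformula, huniq⟩ := generalized_CK_extension_general
    H.isLeftAltAlg v m p (hv.isCliffordSystem H) hp Ω₀ hΩ₀ hΩ₀conn A₀ hA₀
  exact ⟨Aseq, h₀, han, hex, hformula, fun B hB₀ hB ⟨Ω', _, hslice, hinj, _, hsum⟩ =>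
    huniq B hB₀ (fun k => (hB k).contDiffOn hΩ₀.uniqueDiffOn) ⟨Ω', hslice.1, hinj, hsum⟩⟩

end GPSM
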